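/- arXiv:alg-geom/9506002 — 2 statements merged into one kernel-verified Lean document; each statement's English description precedes it below -/
import Mathlib

section
/- Let f : ℝ² → ℝ be a nonconstant real polynomial function of degree d in two variables with only finitely many critical points. Then for every admissible radius R the index i of grad f around the circle of radius R satisfies i ≤ 1 + d̃_R − 2·l''. -/
open MvPolynomial Filter

/-- Evaluation of a polynomial in two variables at the point `(x, y)`. -/
noncomputable def evalP (f : MvPolynomial (Fin 2) ℝ) (x y : ℝ) : ℝ :=
  MvPolynomial.eval ![x, y] f

/-- `p` is a critical point of `f`: both partial derivatives vanish at `p`. -/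
def IsCriticalPt (f : MvPolynomial (Fin 2) ℝ) (p : ℝ × ℝ) : Prop :=
  evalP (pderiv 0 f) p.1 p.2 = 0 ∧ evalP (pderiv 1 f) p.1 p.2 = 0

/-- `u(t) = f_x(R cos t, R sin t)`. -/
noncomputable def uFun (f : MvPolynomial (Fin 2) ℝ) (R t : ℝ) : ℝ :=
  evalP (pderiv 0 f) (R * Real.cos t) (R * Real.sin t)

/-- `v(t) = f_y(R cos t, R sin t)`. -/
noncomputable def vFun (f : MvPolynomial (Fin 2) ℝ) (R t : ℝ) : ℝ :=
  evalP (pderiv 1 f) (R * Real.cos t) (R * Real.sin t)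

/-- The index of `grad f` around the circle of radius `R`, as the winding-number
integral `(1/(2π)) ∫₀^{2π} (u v' - v u')/(u² + v²) dt`. -/
noncomputable def gradIndex (f : MvPolynomial (Fin 2) ℝ) (R : ℝ) : ℝ :=
  (1 / (2 * Real.pi)) *
    ∫ t in (0:ℝ)..(2 * Real.pi),
      (uFun f R t * deriv (vFun f R) t - vFun f R t * deriv (uFun f R) t) /
        ((uFun f R t) ^ 2 + (vFun f R t) ^ 2)

/-- The multiplicity of the real linear form `b·x − a·y` in `F`: the largest `m`
such that `(b·x − a·y)^m` divides `F` in `ℝ[x,y]`. -/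
noncomputable def linMult (F : MvPolynomial (Fin 2) ℝ) (a b : ℝ) : ℕ :=
  sSup {m : ℕ | (C b * X 0 - C a * X 1) ^ m ∣ F}

/-- The "real degree" of a homogeneous polynomial `F`: the sum, over the points
`[a : b]` of the real projective line (represented by `[a : 1]` for `a ∈ ℝ`,
together with `[1 : 0]`), of the multiplicity of the real linear factor
`b·x − a·y` in `F`; i.e. the sum of the multiplicities of the real linear
factors of `F`. -/
noncomputable def realDegreeOf (F : MvPolynomial (Fin 2) ℝ) : ℕ :=
  (∑ᶠ a : ℝ, linMult F a 1) + linMult F 1 0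

/-- The Euclidean norm on `ℝ²`. -/
noncomputable def enorm2 (p : ℝ × ℝ) : ℝ := Real.sqrt (p.1 ^ 2 + p.2 ^ 2)

/-- The projective direction `[a : b]` is in the closure at infinity of some level set
of `f`: there are `t ∈ ℝ` and points with `f = t` going to infinity whose directions
converge to `[a : b]` in the real projective line (equivalently, the normalized
component along the conormal `(b, −a)` tends to `0`). -/
def DirAtInfinity (f : MvPolynomial (Fin 2) ℝ) (a b : ℝ) : Prop :=
  ∃ t : ℝ, ∃ z : ℕ → ℝ × ℝ,
    (∀ n, evalP f (z n).1 (z n).2 = t) ∧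
    Tendsto (fun n => enorm2 (z n)) atTop atTop ∧
    Tendsto (fun n => (b * (z n).1 - a * (z n).2) / enorm2 (z n)) atTop (nhds 0)

open Classical in
/-- `l''`: the number of points of the real projective line (represented by `[a : 1]`,
`a ∈ ℝ`, together with `[1 : 0]`) lying in the closure of some level set of `f`. -/
noncomputable def lSecond (f : MvPolynomial (Fin 2) ℝ) : ℕ :=
  {a : ℝ | DirAtInfinity f a 1}.ncard + (if DirAtInfinity f 1 0 then 1 else 0)

open Classical in
/-- `d̃_R`: the sum of the multiplicities `d_p` over the points `p = [a : b]` of the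
real projective line lying in the closure of some level set of `f`. -/
noncomputable def tildeDR (f : MvPolynomial (Fin 2) ℝ) (d : ℕ) : ℕ :=
  (∑ᶠ a ∈ {a : ℝ | DirAtInfinity f a 1}, linMult (homogeneousComponent d f) a 1) +
    (if DirAtInfinity f 1 0 then linMult (homogeneousComponent d f) 1 0 else 0)


/-- Evaluation in polar coordinates. -/
noncomputable def ev (p : MvPolynomial (Fin 2) ℝ) (r θ : ℝ) : ℝ :=
  evalP p (r * Real.cos θ) (r * Real.sin θ)

/-- The angular derivation. -/
noncomputable def Dp (p : MvPolynomial (Fin 2) ℝ) : MvPolynomial (Fin 2) ℝ :=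
  X 0 * pderiv 1 p - X 1 * pderiv 0 p

/-- The radial (Euler) derivation. -/
noncomputable def Ep (p : MvPolynomial (Fin 2) ℝ) : MvPolynomial (Fin 2) ℝ :=
  X 0 * pderiv 0 p + X 1 * pderiv 1 p

lemma evalP_add (p q : MvPolynomial (Fin 2) ℝ) (x y : ℝ) :
    evalP (p + q) x y = evalP p x y + evalP q x y := by simp [evalP]

lemma evalP_sub (p q : MvPolynomial (Fin 2) ℝ) (x y : ℝ) :
    evalP (p - q) x y = evalP p x y - evalP q x y := by simp [evalP]

lemma evalP_neg (p : MvPolynomial (Fin 2) ℝ) (x y : ℝ) :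
    evalP (-p) x y = - evalP p x y := by simp [evalP]

lemma evalP_mul (p q : MvPolynomial (Fin 2) ℝ) (x y : ℝ) :
    evalP (p * q) x y = evalP p x y * evalP q x y := by simp [evalP]

lemma evalP_X0 (x y : ℝ) : evalP (X 0) x y = x := by simp [evalP]
lemma evalP_X1 (x y : ℝ) : evalP (X 1) x y = y := by simp [evalP]
lemma evalP_C (c x y : ℝ) : evalP (C c) x y = c := by simp [evalP]

lemma evalP_sum {ι : Type*} (s : Finset ι) (p : ι → MvPolynomial (Fin 2) ℝ) (x y : ℝ) :
    evalP (∑ k ∈ s, p k) x y = ∑ k ∈ s, evalP (p k) x y := by simp [evalP]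

lemma hasDerivAt_evalP (p : MvPolynomial (Fin 2) ℝ) {x y : ℝ → ℝ} {x' y' t : ℝ}
    (hx : HasDerivAt x x' t) (hy : HasDerivAt y y' t) :
    HasDerivAt (fun t => evalP p (x t) (y t))
      (evalP (pderiv 0 p) (x t) (y t) * x' + evalP (pderiv 1 p) (x t) (y t) * y') t := by
  induction p using MvPolynomial.induction_on with
  | C a => simpa [evalP] using hasDerivAt_const t a
  | add p q hp hq =>
    simp only [map_add, evalP_add]
    convert! hp.add hq using 1
    ring
  | mul_X p i hp =>
    fin_cases i
    · simp only [evalP_mul, evalP_X0, Fin.zero_eta, Derivation.leibniz, pderiv_X, smul_eq_mul,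
        evalP_add]
      convert! hp.mul hx using 1
      simp [evalP]
      ring
    · simp only [evalP_mul, evalP_X1, Fin.mk_one, Derivation.leibniz, pderiv_X, smul_eq_mul,
        evalP_add]
      convert! hp.mul hy using 1
      simp [evalP]
      ring

lemma continuous_evalP (p : MvPolynomial (Fin 2) ℝ) :
    Continuous (fun q : ℝ × ℝ => evalP p q.1 q.2) := by
  induction p using MvPolynomial.induction_on with
  | C a => simpa [evalP] using continuous_const
  | add p q hp hq => simp only [evalP_add]; fun_prop
  | mul_X p i hp =>
    fin_cases i
    · simp only [Fin.zero_eta, evalP_mul, evalP_X0]; fun_prop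
    · simp only [Fin.mk_one, evalP_mul, evalP_X1]; fun_prop

lemma continuous_ev (p : MvPolynomial (Fin 2) ℝ) :
    Continuous (fun q : ℝ × ℝ => ev p q.1 q.2) := by
  unfold ev
  exact (continuous_evalP p).comp
    (f := fun q : ℝ × ℝ => (q.1 * Real.cos q.2, q.1 * Real.sin q.2)) (by fun_prop)

lemma ev_Dp (p : MvPolynomial (Fin 2) ℝ) (r θ : ℝ) :
    ev (Dp p) r θ = r * (Real.cos θ * ev (pderiv 1 p) r θ - Real.sin θ * ev (pderiv 0 p) r θ) := by
  simp only [ev, Dp, evalP_sub, evalP_mul, evalP_X0, evalP_X1]; ring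

lemma ev_Ep (p : MvPolynomial (Fin 2) ℝ) (r θ : ℝ) :
    ev (Ep p) r θ = r * (Real.cos θ * ev (pderiv 0 p) r θ + Real.sin θ * ev (pderiv 1 p) r θ) := by
  simp only [ev, Ep, evalP_add, evalP_mul, evalP_X0, evalP_X1]; ring

lemma hasDerivAt_ev (p : MvPolynomial (Fin 2) ℝ) (r θ : ℝ) :
    HasDerivAt (fun θ => ev p r θ) (ev (Dp p) r θ) θ := by
  have := hasDerivAt_evalP p ((Real.hasDerivAt_cos θ).const_mul r)
    ((Real.hasDerivAt_sin θ).const_mul r)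
  rw [ev_Dp]
  convert! this using 1
  simp only [ev]; ring

lemma ev_hom {p : MvPolynomial (Fin 2) ℝ} {n : ℕ} (hp : p.IsHomogeneous n) (r θ : ℝ) :
    ev p r θ = r ^ n * ev p 1 θ := by
  simp only [ev, evalP, eval_eq', Finset.mul_sum]
  refine Finset.sum_congr rfl fun s hs => ?_
  have h1 := hp.degree_eq_sum_deg_support hs
  simp [Fin.prod_univ_two] 
  have h2 : n = s 0 + s 1 := by
    rw [h1, Finset.sum_subset (Finset.subset_univ _)]
    · simp
    · intro i _ hi; simpa using hi
  rw [h2, pow_add, mul_pow, mul_pow]; ring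

lemma Dp_hom {p : MvPolynomial (Fin 2) ℝ} {n : ℕ} (hp : p.IsHomogeneous n) :
    (Dp p).IsHomogeneous n := by
  rcases Nat.eq_zero_or_pos n with rfl | hn
  · have := (totalDegree_zero_iff_isHomogeneous _).mpr hp
    rw [totalDegree_eq_zero_iff_eq_C] at this
    rw [this, Dp]; simp [isHomogeneous_zero]
  · have e : n = 1 + (n - 1) := by omega
    unfold Dp
    rw [e]
    exact ((isHomogeneous_X _ _).mul (by simpa using hp.pderiv)).sub
      ((isHomogeneous_X _ _).mul (by simpa using hp.pderiv))

lemma Dp_sum {ι : Type*} (s : Finset ι) (p : ι → MvPolynomial (Fin 2) ℝ) :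
    Dp (∑ k ∈ s, p k) = ∑ k ∈ s, Dp (p k) := by
  simp [Dp, Finset.mul_sum, Finset.sum_sub_distrib]

lemma Ep_sum {ι : Type*} (s : Finset ι) (p : ι → MvPolynomial (Fin 2) ℝ) :
    Ep (∑ k ∈ s, p k) = ∑ k ∈ s, Ep (p k) := by
  simp [Ep, Finset.mul_sum, Finset.sum_add_distrib]

lemma Ep_hom {p : MvPolynomial (Fin 2) ℝ} {n : ℕ} (hp : p.IsHomogeneous n) :
    Ep p = C (n : ℝ) * p := by
  have := hp.sum_X_mul_pderiv
  simp only [Fin.sum_univ_two] at this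
  rw [Ep, this]; simp

lemma DpIter_hom {p : MvPolynomial (Fin 2) ℝ} {n : ℕ} (hp : p.IsHomogeneous n) (m : ℕ) :
    (Dp^[m] p).IsHomogeneous n := by
  induction m with
  | zero => exact hp
  | succ m ih => rw [Function.iterate_succ_apply']; exact Dp_hom ih

lemma DpIter_sum {ι : Type*} (s : Finset ι) (p : ι → MvPolynomial (Fin 2) ℝ) (m : ℕ) :
    Dp^[m] (∑ k ∈ s, p k) = ∑ k ∈ s, Dp^[m] (p k) := by
  induction m with
  | zero => rfl
  | succ m ih => simp only [Function.iterate_succ_apply']; rw [ih, Dp_sum]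

/-- Uniform asymptotics. -/
lemma asym_pos (p : ℕ → MvPolynomial (Fin 2) ℝ) (hp : ∀ k, (p k).IsHomogeneous k) (d : ℕ)
    {K : Set ℝ} (hK : IsCompact K) (h : ∀ θ ∈ K, 0 < ev (p d) 1 θ) :
    ∀ᶠ r in atTop, ∀ θ ∈ K, 0 < ev (∑ k ∈ Finset.range (d + 1), p k) r θ := by
  have hc : Continuous (fun q : ℝ × ℝ =>
      ∑ k ∈ Finset.range (d + 1), q.1 ^ (d - k) * ev (p k) 1 q.2) := by
    refine continuous_finsetSum _ fun k _ => ?_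
    have := (continuous_ev (p k)).comp (f := fun q : ℝ × ℝ => ((1 : ℝ), q.2)) (by fun_prop)
    exact (continuous_fst.pow _).mul this
  have h0 : ∀ θ, ∑ k ∈ Finset.range (d + 1), (0:ℝ) ^ (d - k) * ev (p k) 1 θ = ev (p d) 1 θ := by
    intro θ
    rw [Finset.sum_range_succ, Finset.sum_eq_zero]
    · simp
    · intro k hk
      have : d - k ≠ 0 := by have := Finset.mem_range.mp hk; omega
      simp [this]
  have h1 : ∀ᶠ s in nhds (0:ℝ), ∀ θ ∈ K,
      0 < ∑ k ∈ Finset.range (d + 1), s ^ (d - k) * ev (p k) 1 θ := by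
    apply hK.eventually_forall_of_forall_eventually
    intro θ hθ
    exact hc.continuousAt.eventually (lt_mem_nhds (by simpa [h0] using h θ hθ))
  have h2 := (tendsto_inv_atTop_zero (𝕜 := ℝ)).eventually h1
  filter_upwards [h2, eventually_gt_atTop 0] with r hr hr0 θ hθ
  have := mul_pos (pow_pos hr0 d) (hr θ hθ)
  convert! this using 1
  simp only [ev, evalP_sum, Finset.mul_sum]
  refine Finset.sum_congr rfl fun k hk => ?_
  have hk' : k ≤ d := by have := Finset.mem_range.mp hk; omega
  have := ev_hom (hp k) r θ
  simp only [ev] at this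
  rw [this, ← mul_assoc]
  congr 1
  rw [inv_pow]
  have : r ^ d = r ^ k * r ^ (d - k) := by rw [← pow_add]; congr 1; omega
  rw [this]; field_simp


/-- The linear form `b x - a y`. -/
noncomputable def lf (a b : ℝ) : MvPolynomial (Fin 2) ℝ := C b * X 0 - C a * X 1

lemma lf_hom (a b : ℝ) : (lf a b).IsHomogeneous 1 :=
  (isHomogeneous_C_mul_X b 0).sub (isHomogeneous_C_mul_X a 1)

lemma evalP_lf (a b x y : ℝ) : evalP (lf a b) x y = b * x - a * y := by
  simp [lf, evalP]

lemma aeval_smul_hom {Q : MvPolynomial (Fin 2) ℝ} {n : ℕ} (hQ : Q.IsHomogeneous n)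
    {A : Type*} [CommRing A] [Algebra ℝ A] (c : A) (v : Fin 2 → A) :
    aeval (fun i => c * v i) Q = c ^ n * aeval v Q := by
  simp only [aeval_def, eval₂_eq', Finset.mul_sum]
  refine Finset.sum_congr rfl fun s hs => ?_
  have h1 := hQ.degree_eq_sum_deg_support hs
  have h2 : n = s 0 + s 1 := by
    rw [h1, Finset.sum_subset (Finset.subset_univ _)]
    · simp
    · intro i _ hi; simpa using hi
  simp [Fin.prod_univ_two]
  rw [h2, pow_add, mul_pow, mul_pow]; ring

lemma lf_dvd {Q : MvPolynomial (Fin 2) ℝ} {n : ℕ} (hQ : Q.IsHomogeneous n) {a b : ℝ}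
    (hab : a ≠ 0 ∨ b ≠ 0) (h0 : evalP Q a b = 0) : lf a b ∣ Q := by
  have key : ∀ (c : ℝ) (i : Fin 2), c ≠ 0 →
      (∀ j, lf a b ∣ C c * X j - C (![a, b] j) * X i) → lf a b ∣ Q := by
    intro c i hc hj
    let I := Ideal.span {lf a b}
    let π := Ideal.Quotient.mkₐ ℝ I
    have e1 : aeval (fun j => (C c : MvPolynomial (Fin 2) ℝ) * X j) Q = C c ^ n * Q := by
      rw [aeval_smul_hom hQ (C c : MvPolynomial (Fin 2) ℝ) X]; simp
    have e2 : aeval (fun j => X i * (C (![a, b] j) : MvPolynomial (Fin 2) ℝ)) Q = 0 := by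
      rw [aeval_smul_hom hQ (X i : MvPolynomial (Fin 2) ℝ) (fun j => C (![a, b] j))]
      have : aeval (fun j => (C (![a, b] j) : MvPolynomial (Fin 2) ℝ)) Q
          = C (evalP Q a b) := by
        unfold evalP
        have := MvPolynomial.aeval_algebraMap_apply (MvPolynomial (Fin 2) ℝ) ![a, b] Q
        simp only [MvPolynomial.algebraMap_eq] at this
        simpa [Function.comp_def] using this
      rw [this, h0]; simp
    have e3 : π (aeval (fun j => (C c : MvPolynomial (Fin 2) ℝ) * X j) Q)
        = π (aeval (fun j => X i * (C (![a, b] j) : MvPolynomial (Fin 2) ℝ)) Q) := by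
      rw [MvPolynomial.comp_aeval_apply, MvPolynomial.comp_aeval_apply]
      congr 2
      funext j
      change Ideal.Quotient.mk I _ = Ideal.Quotient.mk I _
      rw [Ideal.Quotient.eq]
      have := hj j
      rw [mul_comm (C (![a, b] j)) (X i)] at this
      exact Ideal.mem_span_singleton.mpr this
    rw [e1, e2, map_zero] at e3
    have e4 : C c ^ n * Q ∈ I := Ideal.Quotient.eq_zero_iff_mem.mp e3
    rw [Ideal.mem_span_singleton] at e4
    obtain ⟨w, hw⟩ := e4
    refine ⟨C (c⁻¹ ^ n) * w, ?_⟩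
    rw [mul_left_comm, ← hw, ← mul_assoc, ← C_pow, ← C_mul, ← mul_pow, inv_mul_cancel₀ hc]
    simp
  rcases hab with h | h
  · refine key a 0 h fun j => ?_
    fin_cases j
    · simp
    · refine ⟨-1, ?_⟩
      simp [lf]
  · refine key b 1 h fun j => ?_
    fin_cases j
    · simp [lf]
    · simp

lemma hom_quot {P q : MvPolynomial (Fin 2) ℝ} {n : ℕ} (hP : P.IsHomogeneous 1)
    (h : (P * q).IsHomogeneous n) (h0 : P * q ≠ 0) :
    ∃ k q', n = k + 1 ∧ q'.IsHomogeneous k ∧ P * q = P * q' := by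
  have e : P * q = ∑ i ∈ Finset.range (q.totalDegree + 1), P * homogeneousComponent i q := by
    rw [← Finset.mul_sum, sum_homogeneousComponent]
  have e2 : P * q = ∑ i ∈ Finset.range (q.totalDegree + 1),
      if n = 1 + i then P * homogeneousComponent i q else 0 := by
    rw [← homogeneousComponent_eq_self h]
    nth_rw 1 [e]
    rw [map_sum]
    refine Finset.sum_congr rfl fun i _ => ?_
    exact homogeneousComponent_of_mem (hP.mul (homogeneousComponent_isHomogeneous i q))
  rcases Nat.eq_zero_or_pos n with hn | hn
  · exfalso; apply h0; rw [e2]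
    refine Finset.sum_eq_zero fun i _ => ?_
    rw [if_neg (by omega)]
  · refine ⟨n - 1, homogeneousComponent (n - 1) q, by omega,
      homogeneousComponent_isHomogeneous _ q, ?_⟩
    rw [e2]
    by_cases hm : n - 1 ∈ Finset.range (q.totalDegree + 1)
    · rw [Finset.sum_eq_single_of_mem _ hm]
      · rw [if_pos (by omega)]
      · intro i _ hi; rw [if_neg (by omega)]
    · rw [Finset.sum_eq_zero, homogeneousComponent_eq_zero]
      · simp
      · rw [Finset.mem_range] at hm; omega
      · intro i hi
        rw [if_neg]; rintro rfl; apply hm; simpa using hi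

lemma factor {a b : ℝ} (hab : a ≠ 0 ∨ b ≠ 0) (n : ℕ) : ∀ {Q : MvPolynomial (Fin 2) ℝ},
    Q.IsHomogeneous n → Q ≠ 0 → ∃ m q, Q = lf a b ^ m * q ∧ evalP q a b ≠ 0 := by
  induction n using Nat.strong_induction_on with
  | _ n ih =>
  intro Q hQ hQ0
  by_cases h : evalP Q a b = 0
  · obtain ⟨w, hw⟩ := lf_dvd hQ hab h
    obtain ⟨k, q', hk, hq', e⟩ := hom_quot (lf_hom a b) (hw ▸ hQ) (hw ▸ hQ0)
    have : q' ≠ 0 := by rintro rfl; apply hQ0; rw [hw, e]; simp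
    obtain ⟨m, q, e', hq⟩ := ih k (by omega) hq' this
    refine ⟨m + 1, q, ?_, hq⟩
    rw [hw, e, e', pow_succ]; ring
  · exact ⟨0, Q, by simp, h⟩

lemma lf_ne_zero {a b : ℝ} (hab : a ≠ 0 ∨ b ≠ 0) : lf a b ≠ 0 := by
  intro h
  have h1 := evalP_lf a b b (-a)
  rw [h] at h1
  simp [evalP] at h1
  rcases hab with h | h
  · nlinarith [mul_self_pos.mpr h, mul_self_nonneg b]
  · nlinarith [mul_self_pos.mpr h, mul_self_nonneg a]

lemma linMult_eq {a b : ℝ} (hab : a ≠ 0 ∨ b ≠ 0) {Q q : MvPolynomial (Fin 2) ℝ} {m : ℕ}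
    (h : Q = lf a b ^ m * q) (hq : evalP q a b ≠ 0) : linMult Q a b = m := by
  have : {k : ℕ | (C b * X 0 - C a * X 1) ^ k ∣ Q} = Set.Iic m := by
    ext k
    change lf a b ^ k ∣ Q ↔ k ≤ m
    constructor
    · intro hk
      by_contra hlt
      have h2 : lf a b ^ (m + 1) ∣ lf a b ^ m * q := h ▸ (pow_dvd_pow _ (by omega)).trans hk
      rw [pow_succ] at h2
      obtain ⟨w, hw⟩ := (mul_dvd_mul_iff_left (pow_ne_zero m (lf_ne_zero hab))).mp h2
      apply hq
      rw [hw, evalP_mul, evalP_lf]; ring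
    · intro hk
      rw [h]
      exact (pow_dvd_pow _ hk).mul_right _
  rw [linMult, this]
  exact csSup_Iic

lemma factor_linMult {a b : ℝ} (hab : a ≠ 0 ∨ b ≠ 0) {n : ℕ} {Q : MvPolynomial (Fin 2) ℝ}
    (hQ : Q.IsHomogeneous n) (hQ0 : Q ≠ 0) :
    ∃ q, Q = lf a b ^ (linMult Q a b) * q ∧ evalP q a b ≠ 0 := by
  obtain ⟨m, q, h, hq⟩ := factor hab n hQ hQ0
  rw [linMult_eq hab h hq]
  exact ⟨q, h, hq⟩

lemma linMult_smul {a b c : ℝ} (hc : c ≠ 0) (Q : MvPolynomial (Fin 2) ℝ) :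
    linMult Q (c * a) (c * b) = linMult Q a b := by
  unfold linMult
  congr 1
  ext k
  have : (C (c * b) * X 0 - C (c * a) * X 1 : MvPolynomial (Fin 2) ℝ) ^ k
      = C (c ^ k) * (C b * X 0 - C a * X 1) ^ k := by
    rw [C_pow, ← mul_pow]; congr 1; simp only [C_mul]; ring
  simp only [Set.mem_ofPred_eq, this]
  have hu : IsUnit (C (c ^ k) : MvPolynomial (Fin 2) ℝ) :=
    (IsUnit.mk0 _ (pow_ne_zero k hc)).map C
  exact hu.mul_left_dvd

lemma linMult_pos_iff {a b : ℝ} (hab : a ≠ 0 ∨ b ≠ 0) {n : ℕ} {Q : MvPolynomial (Fin 2) ℝ}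
    (hQ : Q.IsHomogeneous n) (hQ0 : Q ≠ 0) : 0 < linMult Q a b ↔ evalP Q a b = 0 := by
  obtain ⟨q, h, hq⟩ := factor_linMult hab hQ hQ0
  constructor
  · intro hm
    rw [h, ← Nat.sub_add_cancel hm, pow_succ, evalP_mul, evalP_mul, evalP_lf]; ring
  · intro h0
    by_contra hm
    have : linMult Q a b = 0 := by omega
    rw [this] at h
    apply hq; simp at h; rw [← h]; exact h0

lemma Dp_mul (p q : MvPolynomial (Fin 2) ℝ) : Dp (p * q) = p * Dp q + Dp p * q := by
  simp only [Dp, Derivation.leibniz, smul_eq_mul]; ring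

lemma Dp_pow_succ (p : MvPolynomial (Fin 2) ℝ) (m : ℕ) :
    Dp (p ^ (m + 1)) = C ((m : ℝ) + 1) * p ^ m * Dp p := by
  simp only [Dp, Derivation.leibniz_pow, smul_eq_mul, nsmul_eq_mul]
  simp; ring

lemma evalP_Dp_lf (a b x y : ℝ) : evalP (Dp (lf a b)) x y = - (a * x + b * y) := by
  simp [Dp, lf, evalP, pderiv_X]; ring

lemma evalP_Dp_iter {a b : ℝ} (hab : a ≠ 0 ∨ b ≠ 0) (m : ℕ) :
    ∀ q : MvPolynomial (Fin 2) ℝ, evalP q a b ≠ 0 →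
      evalP (Dp^[m] (lf a b ^ m * q)) a b ≠ 0 := by
  induction m with
  | zero => intro q hq; simpa using hq
  | succ m ih =>
    intro q hq
    rw [Function.iterate_succ_apply]
    have : Dp (lf a b ^ (m + 1) * q)
        = lf a b ^ m * (C ((m : ℝ) + 1) * Dp (lf a b) * q + lf a b * Dp q) := by
      rw [Dp_mul, Dp_pow_succ]; ring
    rw [this]
    apply ih
    rw [evalP_add, evalP_mul, evalP_mul, evalP_C, evalP_mul, evalP_lf, evalP_Dp_lf]
    have h1 : a * a + b * b ≠ 0 := by
      rcases hab with h | h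
      · nlinarith [mul_self_pos.mpr h, mul_self_nonneg b]
      · nlinarith [mul_self_pos.mpr h, mul_self_nonneg a]
    have h2 : (m : ℝ) + 1 ≠ 0 := by positivity
    have : (b * a - a * b) * evalP (Dp q) a b = 0 := by ring
    rw [this, add_zero]
    exact mul_ne_zero (mul_ne_zero h2 (neg_ne_zero.mpr h1)) hq

lemma cos_sin_ne (z : ℝ) : Real.cos z ≠ 0 ∨ Real.sin z ≠ 0 := by
  by_contra! h
  have := Real.sin_sq_add_cos_sq z
  rw [h.1, h.2] at this; norm_num at this

lemma ev_Dp_iter_ne {n : ℕ} {Q : MvPolynomial (Fin 2) ℝ}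
    (hQ : Q.IsHomogeneous n) (hQ0 : Q ≠ 0) (z : ℝ) :
    ev (Dp^[linMult Q (Real.cos z) (Real.sin z)] Q) 1 z ≠ 0 := by
  obtain ⟨q, h, hq⟩ := factor_linMult (cos_sin_ne z) hQ hQ0
  have := evalP_Dp_iter (cos_sin_ne z) (linMult Q (Real.cos z) (Real.sin z)) q hq
  rw [← h] at this
  simpa [ev] using this

/-- Sign of `φ φ'` near a zero. -/
lemma sign_near {n : ℕ} {Q : MvPolynomial (Fin 2) ℝ}
    (hQ : Q.IsHomogeneous n) (hQ0 : Q ≠ 0) (z : ℝ) (hz : ev Q 1 z = 0) :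
    ∀ᶠ θ in nhds z, (z < θ → 0 < ev Q 1 θ * ev (Dp Q) 1 θ) ∧
      (θ < z → ev Q 1 θ * ev (Dp Q) 1 θ < 0) := by
  obtain ⟨q, h, hq⟩ := factor_linMult (cos_sin_ne z) hQ hQ0
  have hm : 0 < linMult Q (Real.cos z) (Real.sin z) := by
    rw [linMult_pos_iff (cos_sin_ne z) hQ hQ0]; simpa [ev] using hz
  obtain ⟨m, hm'⟩ : ∃ m, linMult Q (Real.cos z) (Real.sin z) = m + 1 :=
    ⟨_, (Nat.sub_add_cancel hm).symm⟩
  rw [hm'] at h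
  have hcont : ∀ p : MvPolynomial (Fin 2) ℝ, Continuous (fun θ => ev p 1 θ) := fun p =>
    (continuous_ev p).comp (f := fun θ : ℝ => ((1 : ℝ), θ)) (by fun_prop)
  set w : ℝ → ℝ := fun θ => ev q 1 θ * (((m : ℝ) + 1) * (-Real.cos (θ - z)) * ev q 1 θ
    + (-Real.sin (θ - z)) * ev (Dp q) 1 θ) with hw
  have hwc : Continuous w := by
    have h1 := hcont q
    have h2 := hcont (Dp q)
    fun_prop
  have hw0 : w z < 0 := by
    have hq' : ev q 1 z ≠ 0 := by simpa [ev] using hq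
    have h3 : 0 < ev q 1 z * ev q 1 z := mul_self_pos.mpr hq'
    have h4 : (0:ℝ) < (m : ℝ) + 1 := by positivity
    have := mul_pos h4 h3
    simp only [hw, sub_self, Real.cos_zero, Real.sin_zero]
    nlinarith
  have hprod : ∀ θ, ev Q 1 θ * ev (Dp Q) 1 θ = (-Real.sin (θ - z)) ^ (2 * m + 1) * w θ := by
    intro θ
    have el : evalP (lf (Real.cos z) (Real.sin z)) (1 * Real.cos θ) (1 * Real.sin θ)
        = - Real.sin (θ - z) := by rw [evalP_lf, Real.sin_sub]; ring
    have ed : evalP (Dp (lf (Real.cos z) (Real.sin z))) (1 * Real.cos θ) (1 * Real.sin θ)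
        = - Real.cos (θ - z) := by rw [evalP_Dp_lf, Real.cos_sub]; ring
    have ep : ∀ k, evalP (lf (Real.cos z) (Real.sin z) ^ k) (1 * Real.cos θ) (1 * Real.sin θ)
        = (- Real.sin (θ - z)) ^ k := by
      intro k; rw [← el]; simp [evalP]
    simp only [hw]
    unfold ev
    rw [h, Dp_mul, Dp_pow_succ]
    simp only [evalP_mul, evalP_add, ep, ed, evalP_C]
    ring
  have hn1 : ∀ᶠ θ in nhds z, w θ < 0 := hwc.continuousAt.eventually (gt_mem_nhds hw0)
  have hn2 : ∀ᶠ θ in nhds z, θ < z + Real.pi := gt_mem_nhds (by linarith [Real.pi_pos])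
  have hn3 : ∀ᶠ θ in nhds z, z - Real.pi < θ := lt_mem_nhds (by linarith [Real.pi_pos])
  filter_upwards [hn1, hn2, hn3] with θ h1 h2 h3
  have ho : Odd (2 * m + 1) := ⟨m, rfl⟩
  constructor
  · intro hlt
    rw [hprod]
    have : 0 < Real.sin (θ - z) := Real.sin_pos_of_pos_of_lt_pi (by linarith) (by linarith)
    exact mul_pos_of_neg_of_neg (ho.pow_neg (by linarith)) h1
  · intro hlt
    rw [hprod]
    have : Real.sin (θ - z) < 0 := Real.sin_neg_of_neg_of_neg_pi_lt (by linarith) (by linarith)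
    exact mul_neg_of_pos_of_neg (by apply pow_pos; linarith) h1


lemma clear_denom {K : Type*} [Field K] [Algebra (Polynomial ℝ) K]
    [IsFractionRing (Polynomial ℝ) K] (p : Polynomial K) :
    ∃ c : Polynomial ℝ, c ≠ 0 ∧ ∃ P : Polynomial (Polynomial ℝ),
      P.map (algebraMap (Polynomial ℝ) K)
        = (Polynomial.C c : Polynomial (Polynomial ℝ)).map (algebraMap _ _) * p := by
  obtain ⟨b, hb0, hb⟩ := IsLocalization.integerNormalization_spec
    (nonZeroDivisors (Polynomial ℝ)) p
  refine ⟨b, nonZeroDivisors.ne_zero hb0, _, hb.trans ?_⟩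
  rw [Polynomial.map_C, ← Polynomial.smul_eq_C_mul, algebraMap_smul]

lemma sqfree_part_aux (K : Type*) [Field K] [Algebra (Polynomial ℝ) K]
    [IsFractionRing (Polynomial ℝ) K] [CharZero K] (H : Polynomial (Polynomial ℝ)) (hH : H ≠ 0) :
    ∃ G : Polynomial (Polynomial ℝ), ∀ᶠ r in atTop, ∀ τ : ℝ,
      (Polynomial.evalEval r τ H = 0 ↔ Polynomial.evalEval r τ G = 0) ∧
      (Polynomial.evalEval r τ G = 0 → Polynomial.evalEval r τ (Polynomial.derivative G) ≠ 0) := by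
  classical
  have hinj : Function.Injective (algebraMap (Polynomial ℝ) K) := IsFractionRing.injective _ _
  have hmi : Function.Injective (Polynomial.map (algebraMap (Polynomial ℝ) K)) :=
    Polynomial.map_injective _ hinj
  have hHk0 : H.map (algebraMap (Polynomial ℝ) K) ≠ 0 := by
    rw [ne_eq, Polynomial.map_eq_zero_iff hinj]; exact hH
  obtain ⟨g, N, hsq, ⟨u, hu⟩, ⟨v, hv⟩⟩ := exists_squarefree_dvd_pow_of_ne_zero hHk0
  have hsep : g.Separable := PerfectField.separable_iff_squarefree.mpr hsq
  obtain ⟨a, b, hab⟩ := hsep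
  obtain ⟨c, hc, G, hG⟩ := clear_denom g
  obtain ⟨cu, hcu, U, hU⟩ := clear_denom u
  obtain ⟨cv, hcv, V, hV⟩ := clear_denom v
  obtain ⟨ca, hca, A, hA⟩ := clear_denom a
  obtain ⟨cb, hcb, B, hB⟩ := clear_denom b
  have i1 : Polynomial.C c * Polynomial.C cu * H = G * U := by
    apply hmi
    simp only [Polynomial.map_mul, hG, hU]
    rw [hu]; ring
  have i2 : Polynomial.C cv * G ^ N = Polynomial.C c ^ N * H * V := by
    apply hmi
    simp only [Polynomial.map_mul, Polynomial.map_pow, hG, hV]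
    rw [mul_pow, hv]; ring
  have hG' : (Polynomial.derivative G).map (algebraMap (Polynomial ℝ) K) = (Polynomial.C c : Polynomial (Polynomial ℝ)).map (algebraMap (Polynomial ℝ) K) * Polynomial.derivative g := by
    rw [← Polynomial.derivative_map, hG, Polynomial.map_C, Polynomial.derivative_C_mul]
  have i3 : Polynomial.C cb * A * G + Polynomial.C ca * B * Polynomial.derivative G = Polynomial.C ca * Polynomial.C cb * Polynomial.C c := by
    apply hmi
    simp only [Polynomial.map_mul, Polynomial.map_add, hG, hG', hA, hB]
    linear_combination ((Polynomial.C ca).map (algebraMap (Polynomial ℝ) K) * (Polynomial.C cb).map (algebraMap (Polynomial ℝ) K) * (Polynomial.C c).map (algebraMap (Polynomial ℝ) K)) * hab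
  refine ⟨G, ?_⟩
  filter_upwards [Polynomial.eventually_atTop_not_isRoot c hc, Polynomial.eventually_atTop_not_isRoot cu hcu,
    Polynomial.eventually_atTop_not_isRoot cv hcv, Polynomial.eventually_atTop_not_isRoot ca hca, Polynomial.eventually_atTop_not_isRoot cb hcb]
    with r h1 h2 h3 h4 h5 τ
  simp only [Polynomial.IsRoot.def] at h1 h2 h3 h4 h5
  have j1 := congrArg (Polynomial.evalEval r τ) i1
  have j2 := congrArg (Polynomial.evalEval r τ) i2
  have j3 := congrArg (Polynomial.evalEval r τ) i3
  simp only [Polynomial.evalEval_mul, Polynomial.evalEval_add, Polynomial.evalEval_pow, Polynomial.evalEval_C] at j1 j2 j3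
  refine ⟨⟨fun h => ?_, fun h => ?_⟩, fun h h' => ?_⟩
  · rw [h] at j2
    simp [h3] at j2
    exact j2.1
  · rw [h] at j1
    simp [h1, h2] at j1
    exact j1
  · rw [h, h'] at j3
    simp [h1, h4, h5] at j3

lemma sqfree_part (H : Polynomial (Polynomial ℝ)) (hH : H ≠ 0) :
    ∃ G : Polynomial (Polynomial ℝ), ∀ᶠ r in atTop, ∀ τ : ℝ,
      (Polynomial.evalEval r τ H = 0 ↔ Polynomial.evalEval r τ G = 0) ∧
      (Polynomial.evalEval r τ G = 0 → Polynomial.evalEval r τ (Polynomial.derivative G) ≠ 0) := by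
  have : CharZero (FractionRing (Polynomial ℝ)) :=
    charZero_of_injective_algebraMap
      (IsFractionRing.injective (Polynomial ℝ) (FractionRing (Polynomial ℝ)))
  exact sqfree_part_aux (FractionRing (Polynomial ℝ)) H hH

/-- Rational parametrisation of the circles. -/
lemma exists_rational (z : ℝ) (h : MvPolynomial (Fin 2) ℝ) :
    ∃ (N : ℕ) (H : Polynomial (Polynomial ℝ)), ∀ r τ : ℝ,
      Polynomial.evalEval r τ H = (1 + τ ^ 2) ^ N * ev h r (z + 2 * Real.arctan τ) := by
  have hcos : ∀ τ : ℝ, (1 + τ ^ 2) * Real.cos (z + 2 * Real.arctan τ)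
      = Real.cos z * (1 - τ ^ 2) - Real.sin z * (2 * τ) := by
    intro τ
    have h1 : Real.cos (2 * Real.arctan τ) * (1 + τ ^ 2) = 1 - τ ^ 2 := by
      rw [Real.cos_two_mul, Real.cos_sq_arctan]; field_simp; ring
    have h2 : Real.sin (2 * Real.arctan τ) * (1 + τ ^ 2) = 2 * τ := by
      have e : Real.sin (Real.arctan τ) = τ * Real.cos (Real.arctan τ) := by
        have := Real.tan_mul_cos (Real.cos_arctan_pos τ).ne'
        rw [Real.tan_arctan] at this; exact this.symm
      have e2 := Real.cos_sq_arctan τ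
      have h3 : (1 + τ ^ 2) ≠ 0 := by positivity
      rw [Real.sin_two_mul, e]
      have : 2 * (τ * Real.cos (Real.arctan τ)) * Real.cos (Real.arctan τ) * (1 + τ ^ 2)
        = 2 * τ * (Real.cos (Real.arctan τ) ^ 2 * (1 + τ ^ 2)) := by ring
      rw [this, e2]; field_simp
    rw [Real.cos_add]
    linear_combination Real.cos z * h1 - Real.sin z * h2
  have hsin : ∀ τ : ℝ, (1 + τ ^ 2) * Real.sin (z + 2 * Real.arctan τ)
      = Real.sin z * (1 - τ ^ 2) + Real.cos z * (2 * τ) := by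
    intro τ
    have h1 : Real.cos (2 * Real.arctan τ) * (1 + τ ^ 2) = 1 - τ ^ 2 := by
      rw [Real.cos_two_mul, Real.cos_sq_arctan]; field_simp; ring
    have h2 : Real.sin (2 * Real.arctan τ) * (1 + τ ^ 2) = 2 * τ := by
      have e : Real.sin (Real.arctan τ) = τ * Real.cos (Real.arctan τ) := by
        have := Real.tan_mul_cos (Real.cos_arctan_pos τ).ne'
        rw [Real.tan_arctan] at this; exact this.symm
      have e2 := Real.cos_sq_arctan τ
      have h3 : (1 + τ ^ 2) ≠ 0 := by positivity
      rw [Real.sin_two_mul, e]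
      have : 2 * (τ * Real.cos (Real.arctan τ)) * Real.cos (Real.arctan τ) * (1 + τ ^ 2)
        = 2 * τ * (Real.cos (Real.arctan τ) ^ 2 * (1 + τ ^ 2)) := by ring
      rw [this, e2]; field_simp
    rw [Real.sin_add]
    linear_combination Real.sin z * h1 + Real.cos z * h2
  induction h using MvPolynomial.induction_on with
  | C a => exact ⟨0, Polynomial.C (Polynomial.C a), fun r τ => by simp [ev, evalP]⟩
  | add p q hp hq =>
    obtain ⟨N, H, hH⟩ := hp
    obtain ⟨M, G, hG⟩ := hq
    refine ⟨N + M, (1 + Polynomial.X ^ 2) ^ M * H + (1 + Polynomial.X ^ 2) ^ N * G, fun r τ => ?_⟩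
    simp only [Polynomial.evalEval_mul, Polynomial.evalEval_add, Polynomial.evalEval_pow, Polynomial.evalEval_X, Polynomial.evalEval_one, hH, hG]
    simp only [ev, evalP_add]; ring
  | mul_X p i hp =>
    obtain ⟨N, H, hH⟩ := hp
    fin_cases i
    · refine ⟨N + 1, H * (Polynomial.C Polynomial.X * (Polynomial.C (Polynomial.C (Real.cos z)) * (1 - Polynomial.X ^ 2)
        - Polynomial.C (Polynomial.C (Real.sin z)) * (Polynomial.C (Polynomial.C 2) * Polynomial.X))), fun r τ => ?_⟩
      simp only [Polynomial.evalEval_mul, Polynomial.evalEval_add, Polynomial.evalEval_pow, Polynomial.evalEval_X, Polynomial.evalEval_one, hH,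
        Polynomial.evalEval_sub, Polynomial.evalEval_C, Polynomial.eval_C, Polynomial.eval_X]
      rw [← hcos]
      simp only [ev, evalP_mul, Fin.zero_eta, evalP_X0]; ring
    · refine ⟨N + 1, H * (Polynomial.C Polynomial.X * (Polynomial.C (Polynomial.C (Real.sin z)) * (1 - Polynomial.X ^ 2)
        + Polynomial.C (Polynomial.C (Real.cos z)) * (Polynomial.C (Polynomial.C 2) * Polynomial.X))), fun r τ => ?_⟩
      simp only [Polynomial.evalEval_mul, Polynomial.evalEval_add, Polynomial.evalEval_pow, Polynomial.evalEval_X, Polynomial.evalEval_one, hH,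
        Polynomial.evalEval_sub, Polynomial.evalEval_C, Polynomial.eval_C, Polynomial.eval_X]
      rw [← hsin]
      simp only [ev, evalP_mul, Fin.mk_one, evalP_X1]; ring


lemma ev_C_mul (σ : ℝ) (p : MvPolynomial (Fin 2) ℝ) (r θ : ℝ) :
    ev (C σ * p) r θ = σ * ev p r θ := by simp [ev, evalP_mul, evalP_C]

lemma ev_sum {ι : Type*} (s : Finset ι) (p : ι → MvPolynomial (Fin 2) ℝ) (r θ : ℝ) :
    ev (∑ k ∈ s, p k) r θ = ∑ k ∈ s, ev (p k) r θ := by simp [ev, evalP_sum]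

lemma asym_sign (p : ℕ → MvPolynomial (Fin 2) ℝ) (hp : ∀ k, (p k).IsHomogeneous k) (d : ℕ) (σ : ℝ)
    {K : Set ℝ} (hK : IsCompact K) (h : ∀ θ ∈ K, 0 < σ * ev (p d) 1 θ) :
    ∀ᶠ r in atTop, ∀ θ ∈ K, 0 < σ * ev (∑ k ∈ Finset.range (d + 1), p k) r θ := by
  have := asym_pos (fun k => C σ * p k) (fun k => (hp k).C_mul σ) d hK
    (by simpa only [ev_C_mul] using h)
  simpa only [← Finset.mul_sum, ev_C_mul] using this

lemma asym_iter (f : MvPolynomial (Fin 2) ℝ) (m : ℕ) (σ : ℝ) {K : Set ℝ} (hK : IsCompact K)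
    (h : ∀ θ ∈ K, 0 < σ * ev (Dp^[m] (homogeneousComponent f.totalDegree f)) 1 θ) :
    ∀ᶠ r in atTop, ∀ θ ∈ K, 0 < σ * ev (Dp^[m] f) r θ := by
  have := asym_sign (fun k => Dp^[m] (homogeneousComponent k f))
    (fun k => DpIter_hom (homogeneousComponent_isHomogeneous k f) m) f.totalDegree σ hK h
  rwa [← DpIter_sum, sum_homogeneousComponent] at this

lemma asym_E (f : MvPolynomial (Fin 2) ℝ) (hd : 1 ≤ f.totalDegree) (σ : ℝ) {K : Set ℝ}
    (hK : IsCompact K)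
    (h : ∀ θ ∈ K, 0 < σ * ev (homogeneousComponent f.totalDegree f) 1 θ) :
    ∀ᶠ r in atTop, ∀ θ ∈ K, 0 < σ * ev (Ep f) r θ := by
  have := asym_sign (fun k => C (k : ℝ) * (homogeneousComponent k f))
    (fun k => (homogeneousComponent_isHomogeneous k f).C_mul _) f.totalDegree σ hK (by
      intro θ hθ
      rw [ev_C_mul, mul_left_comm]
      have : (0:ℝ) < f.totalDegree := by exact_mod_cast hd
      exact mul_pos this (h θ hθ))
  have e : Ep f = ∑ k ∈ Finset.range (f.totalDegree + 1),
      C (k : ℝ) * (homogeneousComponent k f) := by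
    conv_lhs => rw [← sum_homogeneousComponent f]
    rw [Ep_sum]
    exact Finset.sum_congr rfl fun k _ => Ep_hom (homogeneousComponent_isHomogeneous k f)
  rwa [← e] at this

lemma asym_gt (f : MvPolynomial (Fin 2) ℝ) (hd : 1 ≤ f.totalDegree) {K : Set ℝ}
    (hK : IsCompact K)
    (h : ∀ θ ∈ K, 0 < ev (homogeneousComponent f.totalDegree f) 1 θ) (c : ℝ) :
    ∀ᶠ r in atTop, ∀ θ ∈ K, c < ev f r θ := by
  have := asym_pos (fun k => homogeneousComponent k f - (if k = 0 then C c else 0)) (by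
      intro k
      refine (homogeneousComponent_isHomogeneous k f).sub ?_
      split_ifs with hk
      · subst hk; exact isHomogeneous_C _ _
      · exact isHomogeneous_zero _ _ _) f.totalDegree hK (by
      intro θ hθ
      simpa [show f.totalDegree ≠ 0 by omega] using h θ hθ)
  have e : ∑ k ∈ Finset.range (f.totalDegree + 1),
      (homogeneousComponent k f - (if k = 0 then C c else 0)) = f - C c := by
    rw [Finset.sum_sub_distrib, sum_homogeneousComponent]
    simp
  rw [e] at this
  filter_upwards [this] with r hr θ hθ
  have := hr θ hθ
  simp only [ev, evalP_sub, evalP_C] at this ⊢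
  linarith

lemma hc_neg (f : MvPolynomial (Fin 2) ℝ) :
    homogeneousComponent (-f).totalDegree (-f) = - homogeneousComponent f.totalDegree f := by
  rw [totalDegree_neg, map_neg]

lemma ev_neg (p : MvPolynomial (Fin 2) ℝ) (r θ : ℝ) : ev (-p) r θ = - ev p r θ := by
  simp [ev, evalP_neg]

lemma Dp_neg (p : MvPolynomial (Fin 2) ℝ) : Dp (-p) = - Dp p := by
  simp [Dp]; ring

lemma Ep_neg (p : MvPolynomial (Fin 2) ℝ) : Ep (-p) = - Ep p := by
  simp [Ep]; ring

lemma dir_neg (f : MvPolynomial (Fin 2) ℝ) (a b : ℝ) (h : DirAtInfinity (-f) a b) :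
    DirAtInfinity f a b := by
  obtain ⟨t, z, h1, h2⟩ := h
  exact ⟨-t, z, fun n => by rw [← h1 n, evalP_neg, neg_neg], h2⟩

lemma asym_lt (f : MvPolynomial (Fin 2) ℝ) (hd : 1 ≤ f.totalDegree) {K : Set ℝ}
    (hK : IsCompact K)
    (h : ∀ θ ∈ K, ev (homogeneousComponent f.totalDegree f) 1 θ < 0) (c : ℝ) :
    ∀ᶠ r in atTop, ∀ θ ∈ K, ev f r θ < c := by
  have := asym_gt (-f) (by rwa [totalDegree_neg]) hK (fun θ hθ => by
    rw [hc_neg, ev_neg]; linarith [h θ hθ]) (-c)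
  filter_upwards [this] with r hr θ hθ
  have := hr θ hθ
  rw [ev_neg] at this
  linarith

lemma continuous_ev_right (p : MvPolynomial (Fin 2) ℝ) (r : ℝ) : Continuous (fun θ => ev p r θ) :=
  (continuous_ev p).comp (f := fun θ : ℝ => (r, θ)) (by fun_prop)

lemma asym_ne (f : MvPolynomial (Fin 2) ℝ) (hd : 1 ≤ f.totalDegree) {K : Set ℝ}
    (hK : IsCompact K)
    (h : ∀ θ ∈ K, ev (homogeneousComponent f.totalDegree f) 1 θ ≠ 0) (c : ℝ) :
    ∀ᶠ r in atTop, ∀ θ ∈ K, ev f r θ ≠ c := by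
  have hc := continuous_ev_right (homogeneousComponent f.totalDegree f) 1
  have h1 := asym_gt f hd (hK.inter_right (isClosed_le continuous_const hc (f := fun _ => (0:ℝ))))
    (fun θ hθ => lt_of_le_of_ne hθ.2 (h θ hθ.1).symm) c
  have h2 := asym_lt f hd (hK.inter_right (isClosed_le hc continuous_const (g := fun _ => (0:ℝ))))
    (fun θ hθ => lt_of_le_of_ne hθ.2 (h θ hθ.1)) c
  filter_upwards [h1, h2] with r h1 h2 θ hθ
  rcases le_total 0 (ev (homogeneousComponent f.totalDegree f) 1 θ) with h | h
  · exact (h1 θ ⟨hθ, h⟩).ne'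
  · exact (h2 θ ⟨hθ, h⟩).ne

lemma dir_of_frequently (f : MvPolynomial (Fin 2) ℝ) (hd : 1 ≤ f.totalDegree) (z ε c : ℝ)
    (hφ : ∀ θ ∈ Set.Icc (z - ε) (z + ε), θ ≠ z →
      ev (homogeneousComponent f.totalDegree f) 1 θ ≠ 0)
    (hfr : ∃ᶠ r in atTop, ∃ θ ∈ Set.Icc (z - ε) (z + ε), ev f r θ = c) :
    DirAtInfinity f (Real.cos z) (Real.sin z) := by
  rw [frequently_atTop] at hfr
  choose r hr θ hθ hf using fun n : ℕ => hfr (n + 1)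
  have hrt : Tendsto r atTop atTop :=
    tendsto_atTop_mono (fun n => by linarith [hr n]) tendsto_natCast_atTop_atTop
  have hrpos : ∀ n, 0 < r n := fun n => by
    have := hr n
    have h2 : (0:ℝ) ≤ n := Nat.cast_nonneg n
    linarith
  have hen : ∀ n, enorm2 (r n * Real.cos (θ n), r n * Real.sin (θ n)) = r n := by
    intro n
    unfold enorm2
    have : (r n * Real.cos (θ n)) ^ 2 + (r n * Real.sin (θ n)) ^ 2 = r n ^ 2 := by
      linear_combination (r n) ^ 2 * Real.sin_sq_add_cos_sq (θ n)
    simp only [this]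
    exact Real.sqrt_sq (hrpos n).le
  have hθt : Tendsto θ atTop (nhds z) := by
    rw [Metric.tendsto_atTop']
    intro δ hδ
    have hK : IsCompact (Set.Icc (z - ε) (z + ε) \ Set.Ioo (z - δ) (z + δ)) :=
      isCompact_Icc.diff isOpen_Ioo
    have := hrt.eventually (asym_ne f hd hK (fun θ hθ => hφ θ hθ.1 (by
      rintro rfl; exact hθ.2 ⟨by linarith, by linarith⟩)) c)
    obtain ⟨N, hN⟩ := eventually_atTop.mp this
    refine ⟨N, fun n hn => ?_⟩
    by_contra hcon
    have := hN n hn.le (θ n) ⟨hθ n, fun hmem => hcon (by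
      rw [Real.dist_eq, abs_lt]; constructor <;> linarith [hmem.1, hmem.2])⟩
    exact this (hf n)
  refine ⟨c, fun n => (r n * Real.cos (θ n), r n * Real.sin (θ n)), hf, ?_, ?_⟩
  · simp only [hen]; exact hrt
  · have : ∀ n, (Real.sin z * (r n * Real.cos (θ n)) - Real.cos z * (r n * Real.sin (θ n)))
        / enorm2 (r n * Real.cos (θ n), r n * Real.sin (θ n)) = Real.sin (z - θ n) := by
      intro n
      rw [hen, Real.sin_sub, div_eq_iff (hrpos n).ne']; ring
    simp only [this]
    have h2 : Tendsto (fun n => Real.sin (z - θ n)) atTop (nhds (Real.sin (z - z))) :=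
      (Real.continuous_sin.tendsto _).comp (tendsto_const_nhds.sub hθt)
    simpa using h2

lemma coercive (f : MvPolynomial (Fin 2) ℝ) (hd : 1 ≤ f.totalDegree) (z ε : ℝ) (hε : 0 < ε)
    (hφ : ∀ θ ∈ Set.Icc (z - ε) (z + ε), θ ≠ z →
      0 < ev (homogeneousComponent f.totalDegree f) 1 θ)
    (hnd : ¬ DirAtInfinity f (Real.cos z) (Real.sin z)) (c : ℝ) :
    ∀ᶠ r in atTop, ∀ θ ∈ Set.Icc (z - ε) (z + ε), c < ev f r θ := by
  by_contra hcon
  apply hnd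
  apply dir_of_frequently f hd z ε c (fun θ h1 h2 => (hφ θ h1 h2).ne')
  have hfr : ∃ᶠ r in atTop, ¬ ∀ θ ∈ Set.Icc (z - ε) (z + ε), c < ev f r θ := not_eventually.mp hcon
  have hedge := asym_gt f hd (isCompact_singleton (x := z + ε)) (by
    intro θ hθ
    rw [Set.mem_singleton_iff] at hθ; subst hθ
    exact hφ _ ⟨by linarith, le_refl _⟩ (by linarith)) c
  refine (hfr.and_eventually hedge).mono ?_
  rintro r ⟨h1, h2⟩
  push Not at h1
  obtain ⟨θ, hθ, hle⟩ := h1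
  have hcont : Continuous (fun θ => ev f r θ) :=
    (continuous_ev f).comp (f := fun θ : ℝ => (r, θ)) (by fun_prop)
  obtain ⟨θ', hθ', e⟩ := intermediate_value_Icc hθ.2 hcont.continuousOn
    ⟨hle, (h2 (z + ε) rfl).le⟩
  exact ⟨θ', ⟨hθ.1.trans hθ'.1, hθ'.2⟩, e⟩


lemma contDiff_evalEval (G : Polynomial (Polynomial ℝ)) :
    ContDiff ℝ 1 (fun q : ℝ × ℝ => Polynomial.evalEval q.1 q.2 G) := by
  have h1 : ∀ p : Polynomial ℝ, ContDiff ℝ 1 (fun q : ℝ × ℝ => Polynomial.eval q.1 p) :=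
    fun p => by
      have h : ContDiff ℝ 1 (fun x : ℝ => Polynomial.eval x p) := by
        simpa only [Polynomial.coe_aeval_eq_eval] using p.contDiff_aeval (𝕜 := ℝ) 1
      exact h.comp contDiff_fst
  induction G using Polynomial.induction_on' with
  | add p q hp hq => simp only [Polynomial.evalEval_add]; exact hp.add hq
  | monomial n a =>
    rw [← Polynomial.C_mul_X_pow_eq_monomial]
    simp only [Polynomial.evalEval_mul, Polynomial.evalEval_C, Polynomial.evalEval_pow,
      Polynomial.evalEval_X]
    exact (h1 a).mul (contDiff_snd.pow n)

lemma hasDerivAt_evalEval (G : Polynomial (Polynomial ℝ)) (r τ : ℝ) :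
    HasDerivAt (fun τ => Polynomial.evalEval r τ G)
      (Polynomial.evalEval r τ (Polynomial.derivative G)) τ := by
  have e : ∀ H : Polynomial (Polynomial ℝ), ∀ τ, Polynomial.evalEval r τ H =
      Polynomial.eval τ (H.map (Polynomial.evalRingHom r)) := by
    intro H τ
    rw [← Polynomial.eval₂_evalRingHom, Polynomial.eval_map]
  simp only [e]
  rw [← Polynomial.derivative_map]
  exact Polynomial.hasDerivAt _ _

lemma local_curve (G : Polynomial (Polynomial ℝ)) (r0 τ0 : ℝ)
    (h0 : Polynomial.evalEval r0 τ0 G = 0)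
    (h1 : Polynomial.evalEval r0 τ0 (Polynomial.derivative G) ≠ 0) :
    ∃ (ψ : ℝ → ℝ) (ψ' : ℝ), ψ r0 = τ0 ∧ HasDerivAt ψ ψ' r0 ∧
      ∀ᶠ r in nhds r0, Polynomial.evalEval r (ψ r) G = 0 := by
  have hs : HasStrictFDerivAt (fun q : ℝ × ℝ => Polynomial.evalEval q.1 q.2 G) _ (r0, τ0) :=
    (contDiff_evalEval G).contDiffAt.hasStrictFDerivAt one_ne_zero
  set L := fderiv ℝ (fun q : ℝ × ℝ => Polynomial.evalEval q.1 q.2 G) (r0, τ0) with hL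
  have hv : (L ∘L .inr ℝ ℝ ℝ) 1 = Polynomial.evalEval r0 τ0 (Polynomial.derivative G) := by
    have a : HasFDerivAt (fun τ : ℝ => (r0, τ)) (ContinuousLinearMap.inr ℝ ℝ ℝ) τ0 :=
      hasFDerivAt_prodMk_right r0 τ0
    have b := (hs.hasFDerivAt.comp τ0 a).hasDerivAt
    exact b.unique (hasDerivAt_evalEval G r0 τ0)
  have hinv : (L ∘L .inr ℝ ℝ ℝ).IsInvertible := by
    refine ⟨ContinuousLinearEquiv.unitsEquivAut ℝ (Units.mk0 _ h1), ?_⟩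
    ext
    rw [hv]
    simp
  refine ⟨hs.implicitFunctionOfProdDomain hinv, _, ?_,
    (hs.hasStrictFDerivAt_implicitFunctionOfProdDomain hinv).hasFDerivAt.hasDerivAt, ?_⟩
  · exact (hs.eventually_apply_eq_iff_implicitFunctionOfProdDomain hinv).self_of_nhds.mp rfl
  · have := hs.eventually_apply_implicitFunctionOfProdDomain hinv
    simpa only [h0] using this

lemma asym_one_ne (f : MvPolynomial (Fin 2) ℝ) (θ : ℝ)
    (h : ev (Dp (homogeneousComponent f.totalDegree f)) 1 θ ≠ 0) :
    ∀ᶠ r in atTop, ev (Dp f) r θ ≠ 0 := by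
  have := asym_iter f 1 (ev (Dp (homogeneousComponent f.totalDegree f)) 1 θ)
    (isCompact_singleton (x := θ)) (by
      intro θ' hθ'
      rw [Set.mem_singleton_iff] at hθ'; subst hθ'
      exact mul_self_pos.mpr h)
  filter_upwards [this] with r hr h0
  have := hr θ rfl
  simp only [Function.iterate_one] at this
  rw [h0] at this; simp at this

lemma sector_pos (f : MvPolynomial (Fin 2) ℝ) (hd : 1 ≤ f.totalDegree) (R : ℝ) (hR : 0 < R)
    (hcrit : ∀ r, R ≤ r → ∀ θ, ¬ (ev (pderiv 0 f) r θ = 0 ∧ ev (pderiv 1 f) r θ = 0))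
    (z ε : ℝ) (hε : 0 < ε) (hεπ : ε < Real.pi)
    (hφ : ∀ θ ∈ Set.Icc (z - ε) (z + ε), θ ≠ z →
      0 < ev (homogeneousComponent f.totalDegree f) 1 θ)
    (he1 : ev (Dp (homogeneousComponent f.totalDegree f)) 1 (z + ε) ≠ 0)
    (he2 : ev (Dp (homogeneousComponent f.totalDegree f)) 1 (z - ε) ≠ 0)
    (hnd : ¬ DirAtInfinity f (Real.cos z) (Real.sin z)) :
    ∀ᶠ r in atTop, ∀ θ ∈ Set.Icc (z - ε) (z + ε), ev (Dp f) r θ = 0 → 0 < ev (Ep f) r θ := by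
  have h1 := asym_one_ne f _ he1
  have h2 := asym_one_ne f _ he2
  obtain ⟨N, H, hH⟩ := exists_rational z (Dp f)
  have hH0 : H ≠ 0 := by
    rintro rfl
    obtain ⟨r, hr⟩ := h1.exists
    have := hH r (Real.tan (ε / 2))
    rw [Real.arctan_tan (by linarith) (by linarith)] at this
    simp only [Polynomial.evalEval_zero] at this
    rw [show z + 2 * (ε / 2) = z + ε by ring] at this
    have h3 : (0:ℝ) < (1 + Real.tan (ε / 2) ^ 2) ^ N := by positivity
    rcases mul_eq_zero.mp this.symm with h | h
    · exact h3.ne' h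
    · exact hr h
  have hHz : ∀ r τ, Polynomial.evalEval r τ H = 0 ↔ ev (Dp f) r (z + 2 * Real.arctan τ) = 0 := by
    intro r τ
    have h3 : (0:ℝ) < (1 + τ ^ 2) ^ N := by positivity
    rw [hH, mul_eq_zero, or_iff_right h3.ne']
  obtain ⟨G, hG⟩ := sqfree_part H hH0
  obtain ⟨X0, hX0⟩ := eventually_atTop.mp
    (((h1.and h2).and hG).and (eventually_ge_atTop R))
  by_contra hcon
  obtain ⟨r1, hr1, hbad⟩ := frequently_atTop.mp (not_eventually.mp hcon) X0
  push Not at hbad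
  obtain ⟨θ1, hθ1, hD1, hE1⟩ := hbad
  obtain ⟨X1, hX1⟩ := eventually_atTop.mp (coercive f hd z ε hε hφ hnd (ev f r1 θ1))
  have hr1X : r1 ≤ X1 := by
    by_contra hlt
    exact lt_irrefl _ (hX1 r1 (not_le.mp hlt).le θ1 hθ1)
  have hKc : IsCompact ((Set.Icc X0 X1 ×ˢ Set.Icc (z - ε) (z + ε)) ∩
      {q : ℝ × ℝ | ev (Dp f) q.1 q.2 = 0 ∧ ev (Ep f) q.1 q.2 ≤ 0}) := by
    refine (isCompact_Icc.prod isCompact_Icc).inter_right ?_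
    exact (isClosed_eq (continuous_ev _) continuous_const).inter
      (isClosed_le (continuous_ev _) continuous_const)
  obtain ⟨⟨rs, θs⟩, ⟨⟨hrs, hθs⟩, hDs, hEs⟩, hmin⟩ := hKc.exists_isMinOn
    ⟨(r1, θ1), ⟨⟨⟨hr1, hr1X⟩, hθ1⟩, hD1, hE1⟩⟩ (continuous_ev f).continuousOn
  simp only at hrs hθs hDs hEs
  have hmin' : ∀ r θ, X0 ≤ r → θ ∈ Set.Icc (z - ε) (z + ε) → ev (Dp f) r θ = 0 →
      ev (Ep f) r θ ≤ 0 → ev f rs θs ≤ ev f r θ := by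
    intro r θ hr hθ hD hE
    rcases le_total r X1 with h | h
    · exact hmin (a := (r, θ)) ⟨⟨⟨hr, h⟩, hθ⟩, hD, hE⟩
    · have a1 := hX1 r h θ hθ
      have a2 : ev f rs θs ≤ ev f r1 θ1 := hmin (a := (r1, θ1)) ⟨⟨⟨hr1, hr1X⟩, hθ1⟩, hD1, hE1⟩
      linarith
  obtain ⟨⟨⟨hb1, hb2⟩, hGs⟩, hRs⟩ := hX0 rs hrs.1
  have hrspos : 0 < rs := by linarith
  have hEs' : ev (Ep f) rs θs < 0 := by
    refine lt_of_le_of_ne hEs fun h0 => ?_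
    rw [ev_Ep] at h0
    rw [ev_Dp] at hDs
    have k1 := (mul_eq_zero.mp h0).resolve_left hrspos.ne'
    have k2 := (mul_eq_zero.mp hDs).resolve_left hrspos.ne'
    have k3 := Real.sin_sq_add_cos_sq θs
    refine hcrit rs hRs θs ⟨?_, ?_⟩
    · linear_combination Real.cos θs * k1 - Real.sin θs * k2 - ev (pderiv 0 f) rs θs * k3
    · linear_combination Real.sin θs * k1 + Real.cos θs * k2 - ev (pderiv 1 f) rs θs * k3
  have hIntv : θs ∈ Set.Ioo (z - ε) (z + ε) := by
    constructor
    · refine lt_of_le_of_ne hθs.1 fun h => hb2 (by rw [h]; exact hDs)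
    · refine lt_of_le_of_ne hθs.2 fun h => hb1 (by rw [← h]; exact hDs)
  have hτ : z + 2 * Real.arctan (Real.tan ((θs - z) / 2)) = θs := by
    rw [Real.arctan_tan (by linarith [hIntv.1]) (by linarith [hIntv.2])]; ring
  have hH1 : Polynomial.evalEval rs (Real.tan ((θs - z) / 2)) H = 0 := by
    rw [hHz, hτ]; exact hDs
  have hG1 := (hGs _).1.mp hH1
  obtain ⟨ψ, ψ', hψ0, hψd, hψe⟩ := local_curve G rs _ hG1 ((hGs _).2 hG1)
  obtain ⟨Θ', hΘ⟩ : ∃ Θ', HasDerivAt (fun r => z + 2 * Real.arctan (ψ r)) Θ' rs :=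
    ⟨_, (hψd.arctan.const_mul 2).const_add z⟩
  have hΘ0 : z + 2 * Real.arctan (ψ rs) = θs := by rw [hψ0, hτ]
  set Θ : ℝ → ℝ := fun r => z + 2 * Real.arctan (ψ r) with hΘdef
  have hF : HasDerivAt (fun r => ev f r (Θ r)) (ev (Ep f) rs θs / rs) rs := by
    have := hasDerivAt_evalP f ((hasDerivAt_id rs).mul hΘ.cos) ((hasDerivAt_id rs).mul hΘ.sin)
    refine this.congr_deriv ?_
    have k2 := hDs
    rw [ev_Dp] at k2
    rw [ev_Ep, eq_div_iff hrspos.ne']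
    simp only [ev, Pi.mul_apply, id, hΘ0, hΘdef] at *
    linear_combination Θ' * rs * k2
  have hcontΘ : Tendsto (fun r => (r, Θ r)) (nhds rs) (nhds (rs, θs)) := by
    have : ContinuousAt (fun r => (r, Θ r)) rs := continuousAt_id.prodMk hΘ.continuousAt
    have h := this.tendsto
    simp only [hΘdef, hΘ0] at h
    exact h
  have n1 : ∀ᶠ r in nhds rs, ev (Ep f) r (Θ r) < 0 :=
    (((continuous_ev (Ep f)).tendsto (rs, θs)).comp hcontΘ).eventually (gt_mem_nhds hEs')
  have n2 : ∀ᶠ r in nhds rs, Θ r ∈ Set.Ioo (z - ε) (z + ε) :=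
    ((continuous_snd.tendsto (rs, θs)).comp hcontΘ).eventually
      (isOpen_Ioo.mem_nhds hIntv)
  have n3 : ∀ᶠ r in nhdsWithin rs (Set.Ioi rs), ev f r (Θ r) < ev f rs θs := by
    have hs := (hasDerivAt_iff_tendsto_slope.mp hF).eventually
      (gt_mem_nhds (div_neg_of_neg_of_pos hEs' hrspos))
    have hs' := hs.filter_mono (nhdsWithin_mono rs (s := Set.Ioi rs) (fun x hx => ne_of_gt hx))
    filter_upwards [hs', self_mem_nhdsWithin] with r hr hr2
    rw [slope_def_field, div_neg_iff] at hr
    have : (0:ℝ) < r - rs := sub_pos.mpr hr2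
    simp only [hΘ0, hΘdef] at hr ⊢
    rcases hr with h | h
    · linarith [h.2]
    · linarith [h.1]
  have nall := ((n1.and (n2.and hψe)).filter_mono nhdsWithin_le_nhds).and
    (n3.and (self_mem_nhdsWithin (s := Set.Ioi rs)))
  obtain ⟨r, ⟨m1, m2, m3⟩, m4, m5⟩ := nall.exists
  have hrX : X0 ≤ r := hrs.1.trans (le_of_lt m5)
  obtain ⟨⟨-, hGr⟩, -⟩ := hX0 r hrX
  have hDr : ev (Dp f) r (Θ r) = 0 := (hHz r (ψ r)).mp ((hGr _).1.mpr m3)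
  have := hmin' r (Θ r) hrX ⟨m2.1.le, m2.2.le⟩ hDr m1.le
  linarith


lemma sign_const (g : ℝ → ℝ) (hg : Continuous g) (a b : ℝ) (hab : a ≤ b)
    (h : ∀ x ∈ Set.Icc a b, g x ≠ 0) : 0 < g a * g b := by
  have ha := h a ⟨le_refl _, hab⟩
  have hb := h b ⟨hab, le_refl _⟩
  by_contra hcon
  have h0 : (0:ℝ) ∈ g '' Set.Icc a b := by
    rcases lt_or_gt_of_ne ha with h1 | h1
    · rcases lt_or_gt_of_ne hb with h2 | h2
      · exact absurd (mul_pos_of_neg_of_neg h1 h2) hcon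
      · exact intermediate_value_Icc hab hg.continuousOn ⟨h1.le, h2.le⟩
    · rcases lt_or_gt_of_ne hb with h2 | h2
      · exact intermediate_value_Icc' hab hg.continuousOn ⟨h2.le, h1.le⟩
      · exact absurd (mul_pos h1 h2) hcon
  obtain ⟨x, hx, e⟩ := h0
  exact h x hx e

lemma sector_pos2 (f : MvPolynomial (Fin 2) ℝ) (hd : 1 ≤ f.totalDegree) (R : ℝ) (hR : 0 < R)
    (hcrit : ∀ r, R ≤ r → ∀ θ, ¬ (ev (pderiv 0 f) r θ = 0 ∧ ev (pderiv 1 f) r θ = 0))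
    (z ε : ℝ) (hε : 0 < ε) (hεπ : ε < Real.pi)
    (hφ : ∀ θ ∈ Set.Icc (z - ε) (z + ε), θ ≠ z →
      ev (homogeneousComponent f.totalDegree f) 1 θ ≠ 0)
    (he1 : ev (Dp (homogeneousComponent f.totalDegree f)) 1 (z + ε) ≠ 0)
    (he2 : ev (Dp (homogeneousComponent f.totalDegree f)) 1 (z - ε) ≠ 0)
    (hnd : ¬ DirAtInfinity f (Real.cos z) (Real.sin z))
    (hp : 0 < ev (homogeneousComponent f.totalDegree f) 1 (z + ε)) :
    0 < ev (homogeneousComponent f.totalDegree f) 1 (z - ε) ∧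
    ∀ᶠ r in atTop, ∀ θ ∈ Set.Icc (z - ε) (z + ε), ev (Dp f) r θ = 0 → 0 < ev (Ep f) r θ := by
  set Q := homogeneousComponent f.totalDegree f with hQ
  have hm : 0 < ev Q 1 (z - ε) := by
    by_contra hcon
    have hneg : ev Q 1 (z - ε) < 0 :=
      lt_of_le_of_ne (not_lt.mp hcon) (hφ _ ⟨le_refl _, by linarith⟩ (by linarith))
    apply hnd
    apply dir_of_frequently f hd z ε 0 hφ
    have k1 := asym_gt f hd (isCompact_singleton (x := z + ε)) (by
      intro θ hθ; rw [Set.mem_singleton_iff] at hθ; subst hθ; exact hp) 0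
    have k2 := asym_lt f hd (isCompact_singleton (x := z - ε)) (by
      intro θ hθ; rw [Set.mem_singleton_iff] at hθ; subst hθ; exact hneg) 0
    refine (k1.and k2).frequently.mono ?_
    rintro r ⟨a1, a2⟩
    exact intermediate_value_Icc (by linarith) (continuous_ev_right f r).continuousOn
      ⟨(a2 _ rfl).le, (a1 _ rfl).le⟩
  refine ⟨hm, sector_pos f hd R hR hcrit z ε hε hεπ ?_ he1 he2 hnd⟩
  intro θ hθ hne
  rcases lt_or_gt_of_ne hne with h | h
  · have := sign_const _ (continuous_ev_right Q 1) (z - ε) θ hθ.1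
      (fun x hx => hφ x ⟨hx.1, hx.2.trans hθ.2⟩ (by linarith [hx.2] : x < z).ne)
    exact (mul_pos_iff_of_pos_left hm).mp this
  · have := sign_const _ (continuous_ev_right Q 1) θ (z + ε) hθ.2
      (fun x hx => hφ x ⟨hθ.1.trans hx.1, hx.2⟩ (by linarith [hx.1] : z < x).ne')
    exact (mul_pos_iff_of_pos_right hp).mp this

lemma sector_any (f : MvPolynomial (Fin 2) ℝ) (hd : 1 ≤ f.totalDegree) (R : ℝ) (hR : 0 < R)
    (hcrit : ∀ r, R ≤ r → ∀ θ, ¬ (ev (pderiv 0 f) r θ = 0 ∧ ev (pderiv 1 f) r θ = 0))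
    (z ε : ℝ) (hε : 0 < ε) (hεπ : ε < Real.pi)
    (hφ : ∀ θ ∈ Set.Icc (z - ε) (z + ε), θ ≠ z →
      ev (homogeneousComponent f.totalDegree f) 1 θ ≠ 0)
    (he1 : ev (Dp (homogeneousComponent f.totalDegree f)) 1 (z + ε) ≠ 0)
    (he2 : ev (Dp (homogeneousComponent f.totalDegree f)) 1 (z - ε) ≠ 0)
    (hnd : ¬ DirAtInfinity f (Real.cos z) (Real.sin z)) :
    ∃ σ : ℝ, 0 < σ * ev (homogeneousComponent f.totalDegree f) 1 (z + ε) ∧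
    0 < σ * ev (homogeneousComponent f.totalDegree f) 1 (z - ε) ∧
    ∀ᶠ r in atTop, ∀ θ ∈ Set.Icc (z - ε) (z + ε), ev (Dp f) r θ = 0 → 0 < σ * ev (Ep f) r θ := by
  rcases lt_or_gt_of_ne (hφ (z + ε) ⟨by linarith, le_refl _⟩ (by linarith)) with h | h
  · refine ⟨-1, by linarith, ?_⟩
    have := sector_pos2 (-f) (by rwa [totalDegree_neg]) R hR
      (by simpa only [map_neg, ev_neg, neg_eq_zero] using hcrit) z ε hε hεπ
      (by simpa only [hc_neg, ev_neg, neg_ne_zero] using hφ)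
      (by simpa only [hc_neg, Dp_neg, ev_neg, neg_ne_zero] using he1)
      (by simpa only [hc_neg, Dp_neg, ev_neg, neg_ne_zero] using he2)
      (fun h => hnd (dir_neg _ _ _ h)) (by rw [hc_neg, ev_neg]; linarith)
    simpa only [hc_neg, Dp_neg, Ep_neg, ev_neg, neg_eq_zero, neg_one_mul] using this
  · refine ⟨1, by linarith, ?_⟩
    have := sector_pos2 f hd R hR hcrit z ε hε hεπ hφ he1 he2 hnd h
    simpa only [one_mul] using this


lemma lift_deriv (L W : ℝ → ℂ) (hL : Continuous L) (hLW : ∀ t, Complex.exp (L t) = W t)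
    (t0 : ℝ) (W' : ℂ) (hW : HasDerivAt W W' t0) : HasDerivAt L (W' / W t0) t0 := by
  have hne : W t0 ≠ 0 := by rw [← hLW]; exact Complex.exp_ne_zero _
  have h1 : HasDerivAt (fun t => L t0 + Complex.log (W t / W t0)) (W' / W t0) t0 := by
    have h2 : HasDerivAt (fun t => W t / W t0) (W' / W t0) t0 := hW.div_const _
    have h3 := h2.clog_real (by simp [div_self hne])
    simpa [div_self hne] using h3.const_add (L t0)
  refine h1.congr_of_eventuallyEq ?_
  have h4 : Tendsto (fun t => (L t - L t0).im) (nhds t0) (nhds 0) := by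
    have : Continuous (fun t => (L t - L t0).im) := by fun_prop
    simpa using this.tendsto t0
  have h5 := h4.eventually (Ioo_mem_nhds (neg_lt_zero.mpr Real.pi_pos) Real.pi_pos)
  filter_upwards [h5] with t ht
  rw [← hLW t, ← hLW t0, ← Complex.exp_sub, Complex.log_exp ht.1 ht.2.le]
  ring

lemma exists_lift (f : MvPolynomial (Fin 2) ℝ) (R : ℝ) (hR : 0 < R)
    (hcrit : ∀ r, R ≤ r → ∀ θ, ¬ (ev (pderiv 0 f) r θ = 0 ∧ ev (pderiv 1 f) r θ = 0))
    (i : ℤ) (hi : (i : ℝ) = gradIndex f R) :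
    ∃ B : ℝ × ℝ → ℝ, Continuous B ∧
      (∀ s θ, R ≤ s → ∃ ρ : ℝ, 0 < ρ ∧ ev (Ep f) s θ = ρ * Real.cos (B (s, θ)) ∧
        ev (Dp f) s θ = ρ * Real.sin (B (s, θ))) ∧
      ∀ s θ, B (s, θ + 2 * Real.pi) = B (s, θ) + 2 * Real.pi * (i - 1) := by
  set w : ℝ × ℝ → ℂ := fun q => (ev (pderiv 0 f) (max R q.1) q.2 : ℂ) +
    (ev (pderiv 1 f) (max R q.1) q.2 : ℂ) * Complex.I with hw
  have hwre : ∀ q, (w q).re = ev (pderiv 0 f) (max R q.1) q.2 := by intro q; simp [hw]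
  have hwim : ∀ q, (w q).im = ev (pderiv 1 f) (max R q.1) q.2 := by intro q; simp [hw]
  have hevc : ∀ p, Continuous (fun q : ℝ × ℝ => ev p (max R q.1) q.2) := fun p =>
    (continuous_ev p).comp (f := fun q : ℝ × ℝ => (max R q.1, q.2)) (by fun_prop)
  have hwc : Continuous w := by
    have h0 := hevc (pderiv 0 f)
    have h1 := hevc (pderiv 1 f)
    exact (Complex.continuous_ofReal.comp h0).add
      ((Complex.continuous_ofReal.comp h1).mul continuous_const)
  have hw0 : ∀ q, w q ≠ 0 := by
    intro q h
    exact hcrit (max R q.1) (le_max_left _ _) q.2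
      ⟨by rw [← hwre, h]; rfl, by rw [← hwim, h]; rfl⟩
  have hsc : IsSimplyConnected (Set.univ : Set (ℝ × ℝ)) := by
    have : ContractibleSpace (Set.univ : Set (ℝ × ℝ)) :=
      (Homeomorph.Set.univ (ℝ × ℝ)).contractibleSpace
    exact SimplyConnectedSpace.ofContractible _
  obtain ⟨L, hLc, hLe⟩ := Complex.exists_continuousOn_eqOn_exp_comp hsc isOpen_univ
    hwc.continuousOn (by rintro ⟨q, -, h⟩; exact hw0 q h)
  rw [continuousOn_univ] at hLc
  have hLe' : ∀ q, Complex.exp (L q) = w q := fun q => hLe (Set.mem_univ q)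
  have hwper : ∀ s θ, w (s, θ + 2 * Real.pi) = w (s, θ) := by
    intro s θ; simp [hw, ev]
  have hIntv : ∀ q : ℝ × ℝ, ∃ n : ℤ,
      (L (q.1, q.2 + 2 * Real.pi)).im - (L q).im = 2 * Real.pi * n := by
    intro q
    have := hwper q.1 q.2
    rw [← hLe', ← hLe', Complex.exp_eq_exp_iff_exists_int] at this
    obtain ⟨n, hn⟩ := this
    refine ⟨n, ?_⟩
    rw [hn]
    simp
    ring
  choose n hn using hIntv
  have hncont : Continuous n := by
    rw [Int.isClosedEmbedding_coe_real.isInducing.continuous_iff]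
    have e : ((fun k : ℤ => (k : ℝ)) ∘ n) = fun q : ℝ × ℝ =>
        ((L (q.1, q.2 + 2 * Real.pi)).im - (L q).im) / (2 * Real.pi) := by
      funext q
      rw [hn]
      simp [Real.pi_ne_zero]
    rw [e]
    have : Continuous fun q : ℝ × ℝ => L (q.1, q.2 + 2 * Real.pi) :=
      hLc.comp (f := fun q : ℝ × ℝ => (q.1, q.2 + 2 * Real.pi)) (by fun_prop)
    fun_prop
  have hnconst : ∀ q, n q = n (R, 0) := fun q => PreconnectedSpace.constant inferInstance hncont
  have hni : n (R, 0) = i := by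
    have hLR : Continuous (fun t : ℝ => L (R, t)) :=
      hLc.comp (f := fun t : ℝ => (R, t)) (by fun_prop)
    have hu : ∀ t, HasDerivAt (uFun f R) (ev (Dp (pderiv 0 f)) R t) t :=
      fun t => hasDerivAt_ev (pderiv 0 f) R t
    have hv : ∀ t, HasDerivAt (vFun f R) (ev (Dp (pderiv 1 f)) R t) t :=
      fun t => hasDerivAt_ev (pderiv 1 f) R t
    have hW : ∀ t, w (R, t) = (uFun f R t : ℂ) + (vFun f R t : ℂ) * Complex.I := by
      intro t; simp [hw, ev, uFun, vFun]
    have hpos : ∀ t, (uFun f R t) ^ 2 + (vFun f R t) ^ 2 ≠ 0 := by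
      intro t h0
      refine hcrit R le_rfl t ⟨?_, ?_⟩
      · have : (uFun f R t) ^ 2 = 0 := by nlinarith [sq_nonneg (uFun f R t), sq_nonneg (vFun f R t)]
        exact pow_eq_zero_iff (two_ne_zero) |>.mp this
      · have : (vFun f R t) ^ 2 = 0 := by nlinarith [sq_nonneg (uFun f R t), sq_nonneg (vFun f R t)]
        exact pow_eq_zero_iff (two_ne_zero) |>.mp this
    have hder : ∀ t, HasDerivAt (fun t => (L (R, t)).im)
        ((uFun f R t * deriv (vFun f R) t - vFun f R t * deriv (uFun f R) t) /
        ((uFun f R t) ^ 2 + (vFun f R t) ^ 2)) t := by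
      intro t
      have h1 : HasDerivAt (fun t => w (R, t)) ((ev (Dp (pderiv 0 f)) R t : ℂ) +
          (ev (Dp (pderiv 1 f)) R t : ℂ) * Complex.I) t := by
        simp only [hW]
        exact (hu t).ofReal_comp.add ((hv t).ofReal_comp.mul_const _)
      have h2 := lift_deriv (fun t => L (R, t)) (fun t => w (R, t)) hLR (fun t => hLe' _) t _ h1
      have h3 := (Complex.imCLM.hasFDerivAt.comp_hasDerivAt t h2)
      refine h3.congr_deriv ?_
      rw [(hu t).deriv, (hv t).deriv, hW]
      have hp := hpos t
      simp [Complex.div_im, Complex.normSq_apply]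
      rw [← sq, ← sq]
      field_simp
    have hcu : Continuous (uFun f R) := continuous_ev_right (pderiv 0 f) R
    have hcv : Continuous (vFun f R) := continuous_ev_right (pderiv 1 f) R
    have hcont : Continuous (fun t => (uFun f R t * deriv (vFun f R) t -
        vFun f R t * deriv (uFun f R) t) / ((uFun f R t) ^ 2 + (vFun f R t) ^ 2)) := by
      have e1 : deriv (uFun f R) = fun t => ev (Dp (pderiv 0 f)) R t := funext fun t => (hu t).deriv
      have e2 : deriv (vFun f R) = fun t => ev (Dp (pderiv 1 f)) R t := funext fun t => (hv t).deriv
      have c1 := continuous_ev_right (Dp (pderiv 0 f)) R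
      have c2 := continuous_ev_right (Dp (pderiv 1 f)) R
      rw [e1, e2]
      exact ((hcu.mul c2).sub (hcv.mul c1)).div ((hcu.pow 2).add (hcv.pow 2)) hpos
    have hI := intervalIntegral.integral_eq_sub_of_hasDerivAt (a := 0) (b := 2 * Real.pi)
      (fun t _ => hder t) (hcont.intervalIntegrable _ _)
    have h0 := hn (R, 0)
    simp only [zero_add] at h0
    unfold gradIndex at hi
    rw [hI, h0] at hi
    have : (i : ℝ) = n (R, 0) := by
      rw [hi]; field_simp
    exact_mod_cast this.symm
  refine ⟨fun q => (L q).im - q.2, by fun_prop, ?_, ?_⟩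
  · intro s θ hs
    have hspos : 0 < s := by linarith
    refine ⟨s * Real.exp (L (s, θ)).re, by positivity, ?_, ?_⟩
    · have hx := hwre (s, θ)
      have hy := hwim (s, θ)
      rw [← hLe', Complex.exp_re] at hx
      rw [← hLe', Complex.exp_im] at hy
      simp only [max_eq_right hs] at hx hy
      rw [ev_Ep, ← hx, ← hy, Real.cos_sub]; ring
    · have hx := hwre (s, θ)
      have hy := hwim (s, θ)
      rw [← hLe', Complex.exp_re] at hx
      rw [← hLe', Complex.exp_im] at hy
      simp only [max_eq_right hs] at hx hy
      rw [ev_Dp, ← hx, ← hy, Real.sin_sub]; ring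
  · intro s θ
    have := hn (s, θ)
    rw [hnconst, hni] at this
    simp only at this ⊢
    linarith


lemma cos_half (n : ℤ) : Real.cos (Real.pi * n + Real.pi / 2) = 0 := by
  rw [Real.cos_eq_zero_iff]; exact ⟨n, by ring⟩

lemma band (g : ℝ → ℝ) (hg : Continuous g) (a b : ℝ) (hab : a ≤ b)
    (h : ∀ x ∈ Set.Icc a b, Real.cos (g x) ≠ 0) (n : ℤ)
    (hx : |g a - Real.pi * n| < Real.pi / 2) : |g b - Real.pi * n| < Real.pi / 2 := by
  rw [abs_lt] at hx
  have key : ∀ v, Real.cos v = 0 → v ∉ g '' Set.Icc a b := by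
    rintro v hv ⟨x, hx, rfl⟩; exact h x hx hv
  by_contra hcon
  rw [abs_lt, not_and_or, not_lt, not_lt] at hcon
  rcases hcon with h1 | h1
  · refine key (Real.pi * ((n - 1 : ℤ) : ℝ) + Real.pi / 2) (cos_half _) ?_
    refine intermediate_value_Icc' hab hg.continuousOn ⟨?_, ?_⟩ <;> push_cast <;> linarith
  · refine key (Real.pi * n + Real.pi / 2) (cos_half _) ?_
    refine intermediate_value_Icc hab hg.continuousOn ⟨?_, ?_⟩ <;> linarith

/-- The limiting level of the lifted angle. -/
def Lvl (B : ℝ × ℝ → ℝ) (θ : ℝ) (n : ℤ) : Prop :=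
  ∀ᶠ s in atTop, |B (s, θ) - Real.pi * n| < Real.pi / 2

lemma Lvl.unique {B : ℝ × ℝ → ℝ} {θ : ℝ} {n m : ℤ} (h1 : Lvl B θ n) (h2 : Lvl B θ m) : n = m := by
  obtain ⟨s, a, b⟩ := (Filter.Eventually.and h1 h2).exists
  rw [abs_lt] at a b
  have hp := Real.pi_pos
  have k1 : (n : ℝ) - m < 1 := by nlinarith
  have k2 : (m : ℝ) - n < 1 := by nlinarith
  have k3 : n - m < 1 := by exact_mod_cast k1
  have k4 : m - n < 1 := by exact_mod_cast k2
  omega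

lemma lvl_exists (f : MvPolynomial (Fin 2) ℝ) (hd : 1 ≤ f.totalDegree) (R : ℝ) 
    (B : ℝ × ℝ → ℝ) (hBc : Continuous B)
    (hB : ∀ s θ, R ≤ s → ∃ ρ : ℝ, 0 < ρ ∧ ev (Ep f) s θ = ρ * Real.cos (B (s, θ)) ∧
        ev (Dp f) s θ = ρ * Real.sin (B (s, θ))) (θ : ℝ)
    (hθ : ev (homogeneousComponent f.totalDegree f) 1 θ ≠ 0) : ∃ n, Lvl B θ n := by
  have h := asym_E f hd (ev (homogeneousComponent f.totalDegree f) 1 θ)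
    (isCompact_singleton (x := θ)) (by
      intro θ' hθ'
      rw [Set.mem_singleton_iff] at hθ'; subst hθ'
      exact mul_self_pos.mpr hθ)
  obtain ⟨X, hX⟩ := eventually_atTop.mp (h.and (eventually_ge_atTop R))
  have hcos : ∀ s, X ≤ s → Real.cos (B (s, θ)) ≠ 0 := by
    intro s hs h0
    obtain ⟨h1, h2⟩ := hX s hs
    obtain ⟨ρ, -, h3, -⟩ := hB s θ h2
    have := h1 θ rfl
    rw [h3, h0] at this
    simp at this
  have hpi := Real.pi_pos
  have hk : ∃ n : ℤ, |B (X, θ) - Real.pi * n| < Real.pi / 2 := by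
    refine ⟨round (B (X, θ) / Real.pi), ?_⟩
    have h1 := abs_sub_round (B (X, θ) / Real.pi)
    have h2 : |B (X, θ) - Real.pi * (round (B (X, θ) / Real.pi) : ℤ)| ≤ Real.pi / 2 := by
      have e : B (X, θ) - Real.pi * (round (B (X, θ) / Real.pi) : ℤ) =
          Real.pi * (B (X, θ) / Real.pi - (round (B (X, θ) / Real.pi) : ℤ)) := by
        field_simp
      rw [e, abs_mul, abs_of_pos hpi]
      nlinarith
    refine lt_of_le_of_ne h2 fun h3 => ?_
    apply hcos X le_rfl
    rcases (abs_eq (by positivity)).mp h3 with h4 | h4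
    · rw [show B (X, θ) = Real.pi * (round (B (X, θ) / Real.pi) : ℤ) + Real.pi / 2 by linarith]
      exact cos_half _
    · rw [show B (X, θ) = Real.pi * ((round (B (X, θ) / Real.pi) - 1 : ℤ) : ℝ) + Real.pi / 2 by
        push_cast; linarith]
      exact cos_half _
  obtain ⟨n, hn⟩ := hk
  refine ⟨n, ?_⟩
  filter_upwards [eventually_ge_atTop X] with s hs
  exact band (fun s => B (s, θ)) (hBc.comp (f := fun s : ℝ => (s, θ)) (by fun_prop)) X s hs
    (fun x hx => hcos x hx.1) n hn

lemma lvl_const (f : MvPolynomial (Fin 2) ℝ) (hd : 1 ≤ f.totalDegree) (R : ℝ) 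
    (B : ℝ × ℝ → ℝ) (hBc : Continuous B)
    (hB : ∀ s θ, R ≤ s → ∃ ρ : ℝ, 0 < ρ ∧ ev (Ep f) s θ = ρ * Real.cos (B (s, θ)) ∧
        ev (Dp f) s θ = ρ * Real.sin (B (s, θ))) (α β : ℝ) (hαβ : α ≤ β)
    (hθ : ∀ θ ∈ Set.Icc α β, ev (homogeneousComponent f.totalDegree f) 1 θ ≠ 0) (n : ℤ)
    (hn : Lvl B α n) : Lvl B β n := by
  have h := asym_E f hd (ev (homogeneousComponent f.totalDegree f) 1 α)
    (isCompact_Icc (a := α) (b := β)) (by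
      intro θ hθ'
      exact sign_const _ (continuous_ev_right _ 1) α θ hθ'.1
        (fun x hx => hθ x ⟨hx.1, hx.2.trans hθ'.2⟩))
  unfold Lvl at hn ⊢
  filter_upwards [h, eventually_ge_atTop R, hn] with s h1 h2 h3
  refine band (fun θ => B (s, θ)) (hBc.comp (f := fun θ : ℝ => (s, θ)) (by fun_prop)) α β hαβ
    (fun θ hx h0 => ?_) n h3
  obtain ⟨ρ, -, h4, -⟩ := hB s θ h2
  have := h1 θ hx
  rw [h4, h0] at this
  simp at this

lemma sin_cos_shift (x : ℝ) (n : ℤ) : 2 * (Real.sin x * Real.cos x) =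
    Real.sin (2 * (x - Real.pi * n)) := by
  have : 2 * (x - Real.pi * n) = 2 * x - n * (2 * Real.pi) := by ring
  rw [this, Real.sin_sub_int_mul_two_pi, Real.sin_two_mul]; ring

lemma lvl_edge (f : MvPolynomial (Fin 2) ℝ) (hd : 1 ≤ f.totalDegree) (R : ℝ) 
    (B : ℝ × ℝ → ℝ) 
    (hB : ∀ s θ, R ≤ s → ∃ ρ : ℝ, 0 < ρ ∧ ev (Ep f) s θ = ρ * Real.cos (B (s, θ)) ∧
        ev (Dp f) s θ = ρ * Real.sin (B (s, θ))) (θ : ℝ) (n : ℤ)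
    (hn : Lvl B θ n) :
    (0 < ev (homogeneousComponent f.totalDegree f) 1 θ *
      ev (Dp (homogeneousComponent f.totalDegree f)) 1 θ →
      ∀ᶠ s in atTop, Real.pi * n < B (s, θ)) ∧
    (ev (homogeneousComponent f.totalDegree f) 1 θ *
      ev (Dp (homogeneousComponent f.totalDegree f)) 1 θ < 0 →
      ∀ᶠ s in atTop, B (s, θ) < Real.pi * n) := by
  set Q := homogeneousComponent f.totalDegree f with hQ
  have main : ev Q 1 θ * ev (Dp Q) 1 θ ≠ 0 → ∀ᶠ s in atTop,
      0 < (ev Q 1 θ * ev (Dp Q) 1 θ) * Real.sin (2 * (B (s, θ) - Real.pi * n)) := by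
    intro hne
    have hq : ev Q 1 θ ≠ 0 := left_ne_zero_of_mul hne
    have hq' : ev (Dp Q) 1 θ ≠ 0 := right_ne_zero_of_mul hne
    have h1 := asym_E f hd (ev Q 1 θ)
      (isCompact_singleton (x := θ)) (by
        intro θ' hθ'
        rw [Set.mem_singleton_iff] at hθ'; subst hθ'
        exact mul_self_pos.mpr hq)
    have h2 := asym_iter f 1 (ev (Dp Q) 1 θ)
      (isCompact_singleton (x := θ)) (by
        intro θ' hθ'
        rw [Set.mem_singleton_iff] at hθ'; subst hθ'
        exact mul_self_pos.mpr hq')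
    filter_upwards [h1, h2, eventually_ge_atTop R] with s k1 k2 k3
    have k1 := k1 θ rfl
    have k2 := k2 θ rfl
    obtain ⟨ρ, hρ, e1, e2⟩ := hB s θ k3
    simp only [Function.iterate_one] at k2
    rw [← sin_cos_shift]
    rw [e1] at k1
    rw [e2] at k2
    have k4 := mul_pos k1 k2
    have : (ev Q 1 θ * (ρ * Real.cos (B (s, θ)))) * (ev (Dp Q) 1 θ * (ρ * Real.sin (B (s, θ)))) =
      ρ ^ 2 * ((ev Q 1 θ * ev (Dp Q) 1 θ) * (Real.sin (B (s, θ)) * Real.cos (B (s, θ)))) := by ring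
    rw [this] at k4
    have := (mul_pos_iff_of_pos_left (by positivity)).mp k4
    linarith
  constructor
  · intro h
    filter_upwards [main h.ne', hn] with s h1 h2
    rw [abs_lt] at h2
    by_contra hcon
    have := Real.sin_nonpos_of_nonpos_of_neg_pi_le
      (x := 2 * (B (s, θ) - Real.pi * n)) (by linarith) (by linarith)
    nlinarith
  · intro h
    filter_upwards [main h.ne, hn] with s h1 h2
    rw [abs_lt] at h2
    by_contra hcon
    have := Real.sin_nonneg_of_nonneg_of_le_pi
      (x := 2 * (B (s, θ) - Real.pi * n)) (by linarith) (by linarith)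
    nlinarith

lemma rolle_count (s a b : ℝ) (k : ℕ) : ∀ p : MvPolynomial (Fin 2) ℝ,
    (∀ θ ∈ Set.Icc a b, ev (Dp^[k] p) s θ ≠ 0) → ∀ T : Finset ℝ,
    (∀ θ ∈ T, θ ∈ Set.Icc a b ∧ ev p s θ = 0) → T.card ≤ k := by
  induction k with
  | zero =>
    intro p hp T hT
    rw [Nat.le_zero, Finset.card_eq_zero, Finset.eq_empty_iff_forall_notMem]
    intro θ hθ
    exact hp θ (hT θ hθ).1 (hT θ hθ).2
  | succ k ih =>
    intro p hp T hT
    have ih' := ih (Dp p) (by simpa only [Function.iterate_succ_apply] using hp)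
    have hfin : {θ | θ ∈ Set.Icc a b ∧ ev (Dp p) s θ = 0}.Finite := by
      by_contra hinf
      obtain ⟨t, ht, hc⟩ := Set.Infinite.exists_subset_card_eq hinf (k + 1)
      have := ih' t (fun θ hθ => ht hθ)
      omega
    have h1 := ih' hfin.toFinset (fun θ hθ => by simpa using hθ)
    have h2 : T.card ≤ hfin.toFinset.card + 1 := by
      apply Finset.card_le_of_interleaved
      intro x hx y hy hxy _
      obtain ⟨c, hc, hc0⟩ := exists_hasDerivAt_eq_zero hxy (continuous_ev_right p s).continuousOn
        (by rw [(hT x hx).2, (hT y hy).2]) (fun θ _ => hasDerivAt_ev p s θ)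
      refine ⟨c, ?_, hc.1, hc.2⟩
      simp only [Set.Finite.mem_toFinset]
      exact ⟨⟨(hT x hx).1.1.trans hc.1.le, hc.2.le.trans (hT y hy).1.2⟩, hc0⟩
    omega


open Classical in
/-- Bound for the jump of the level at a zero direction. -/
noncomputable def Jb (f : MvPolynomial (Fin 2) ℝ) (z : ℝ) : ℤ :=
  if DirAtInfinity f (Real.cos z) (Real.sin z) then
    (linMult (homogeneousComponent f.totalDegree f) (Real.cos z) (Real.sin z) : ℤ) - 2 else 0

lemma hcQ_ne (f : MvPolynomial (Fin 2) ℝ) (hd : 1 ≤ f.totalDegree) :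
    homogeneousComponent f.totalDegree f ≠ 0 := by
  intro h
  have hf : f ≠ 0 := by rintro rfl; simp at hd
  obtain ⟨b, hb, hbd⟩ := Finset.exists_mem_eq_sup f.support
    (support_nonempty.mpr hf) (fun s => s.sum fun _ e => e)
  have h1 := coeff_homogeneousComponent f.totalDegree f b
  rw [h, coeff_zero, if_pos] at h1
  · exact (mem_support_iff.mp hb) h1.symm
  · rw [Finsupp.degree_eq_sum]
    unfold totalDegree
    rw [hbd, Finsupp.sum_fintype _ _ (fun _ => rfl)]

lemma jump (f : MvPolynomial (Fin 2) ℝ) (hd : 1 ≤ f.totalDegree) (R : ℝ) (hR : 0 < R)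
    (hcrit : ∀ r, R ≤ r → ∀ θ, ¬ (ev (pderiv 0 f) r θ = 0 ∧ ev (pderiv 1 f) r θ = 0))
    (B : ℝ × ℝ → ℝ) (hBc : Continuous B)
    (hB : ∀ s θ, R ≤ s → ∃ ρ : ℝ, 0 < ρ ∧ ev (Ep f) s θ = ρ * Real.cos (B (s, θ)) ∧
        ev (Dp f) s θ = ρ * Real.sin (B (s, θ))) (z : ℝ)
    (hz : ev (homogeneousComponent f.totalDegree f) 1 z = 0) :
    ∀ᶠ ε in nhdsWithin 0 (Set.Ioi 0), ∀ a b, Lvl B (z - ε) a → Lvl B (z + ε) b → b - a ≤ Jb f z := by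
  have hQ0 := hcQ_ne f hd
  have hQ := homogeneousComponent_isHomogeneous f.totalDegree f
  set Q := homogeneousComponent f.totalDegree f with hQdef
  set m := linMult Q (Real.cos z) (Real.sin z) with hm
  have hm1 : 1 ≤ m := (linMult_pos_iff (cos_sin_ne z) hQ hQ0).mpr (by simpa [ev] using hz)
  have hDm := ev_Dp_iter_ne hQ hQ0 z
  rw [← hm] at hDm
  have n1 := sign_near hQ hQ0 z hz
  have n2 : ∀ᶠ θ in nhds z, 0 < ev (Dp^[m] Q) 1 z * ev (Dp^[m] Q) 1 θ :=
    ((continuous_const.mul (continuous_ev_right _ 1)).tendsto z).eventually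
      (lt_mem_nhds (mul_self_pos.mpr hDm))
  obtain ⟨δ, hδ, hδ2⟩ := Metric.eventually_nhds_iff.mp (n1.and n2)
  have hmem : Set.Ioo (0:ℝ) (min δ Real.pi) ∈ nhdsWithin (0:ℝ) (Set.Ioi 0) :=
    Ioo_mem_nhdsGT (lt_min hδ Real.pi_pos)
  filter_upwards [hmem] with ε hε a b ha hb
  have hε0 : 0 < ε := hε.1
  have hεδ : ε < δ := hε.2.trans_le (min_le_left _ _)
  have hεπ : ε < Real.pi := hε.2.trans_le (min_le_right _ _)
  have hin : ∀ θ ∈ Set.Icc (z - ε) (z + ε), dist θ z < δ := by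
    intro θ hθ
    rw [Real.dist_eq, abs_lt]; constructor <;> linarith [hθ.1, hθ.2]
  have hep : 0 < ev Q 1 (z + ε) * ev (Dp Q) 1 (z + ε) :=
    (hδ2 (hin _ ⟨by linarith, le_rfl⟩)).1.1 (by linarith)
  have hem : ev Q 1 (z - ε) * ev (Dp Q) 1 (z - ε) < 0 :=
    (hδ2 (hin _ ⟨le_rfl, by linarith⟩)).1.2 (by linarith)
  have g1 := (lvl_edge f hd R B hB (z + ε) b hb).1 hep
  have g2 := (lvl_edge f hd R B hB (z - ε) a ha).2 hem
  have hpi := Real.pi_pos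
  have hzeros : ∀ s, Real.pi * b < B (s, z + ε) → B (s, z - ε) < Real.pi * a →
      ∀ k ∈ Finset.Icc a b, ∃ θ ∈ Set.Icc (z - ε) (z + ε), B (s, θ) = Real.pi * k := by
    intro s h1 h2 k hk
    rw [Finset.mem_Icc] at hk
    have c1 : (a : ℝ) ≤ k := by exact_mod_cast hk.1
    have c2 : (k : ℝ) ≤ b := by exact_mod_cast hk.2
    refine intermediate_value_Icc (by linarith)
      (hBc.comp (f := fun θ : ℝ => (s, θ)) (by fun_prop)).continuousOn ⟨?_, ?_⟩
    · exact h2.le.trans (by nlinarith)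
    · exact le_trans (by nlinarith) h1.le
  unfold Jb
  split_ifs with hdir
  · rw [← hQdef, ← hm]
    by_cases hab : a ≤ b
    · have g3 := asym_iter f m (ev (Dp^[m] Q) 1 z) (isCompact_Icc (a := z - ε) (b := z + ε))
        (fun θ hθ => (hδ2 (hin θ hθ)).2)
      obtain ⟨s, ⟨s1, s2⟩, s3, s4⟩ := ((g1.and g2).and (g3.and (eventually_ge_atTop R))).exists
      have hk := hzeros s s1 s2
      choose! t ht1 ht2 using hk
      have hinj : Set.InjOn t (Finset.Icc a b : Finset ℤ) := by
        intro k hk k' hk' e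
        have e1 := ht2 k hk
        have e2 := ht2 k' hk'
        rw [e, e2] at e1
        exact_mod_cast (mul_left_cancel₀ hpi.ne' e1).symm
      have hcard := rolle_count s (z - ε) (z + ε) (m - 1) (Dp f) (by
        intro θ hθ h0
        have := s3 θ hθ
        rw [← Function.iterate_succ_apply, show (m - 1).succ = m by omega] at h0
        rw [h0] at this
        simp at this) ((Finset.Icc a b).image t) (by
        intro θ hθ
        obtain ⟨k, hk, rfl⟩ := Finset.mem_image.mp hθ
        refine ⟨ht1 k hk, ?_⟩
        obtain ⟨ρ, -, -, e⟩ := hB s (t k) s4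
        rw [e, ht2 k hk, mul_comm Real.pi, Real.sin_int_mul_pi, mul_zero])
      rw [Finset.card_image_of_injOn hinj, Int.card_Icc] at hcard
      omega
    · omega
  · by_contra hcon
    obtain ⟨σ, -, -, hσ⟩ := sector_any f hd R hR hcrit z ε hε0 hεπ
      (by
        intro θ hθ hne h0
        have := (hδ2 (hin θ hθ)).1
        rw [← hQdef] at h0
        rw [h0, zero_mul] at this
        rcases lt_or_gt_of_ne hne with h | h
        · exact lt_irrefl _ (this.2 h)
        · exact lt_irrefl _ (this.1 h))
      (right_ne_zero_of_mul hep.ne') (right_ne_zero_of_mul hem.ne) hdir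
    obtain ⟨s, ⟨s1, s2⟩, s3, s4⟩ := ((g1.and g2).and (hσ.and (eventually_ge_atTop R))).exists
    have hpos : ∀ k ∈ Finset.Icc a b, 0 < σ * Real.cos (Real.pi * k) := by
      intro k hk
      obtain ⟨θ, hθ, e⟩ := hzeros s s1 s2 k hk
      obtain ⟨ρ, hρ, e1, e2⟩ := hB s θ s4
      have := s3 θ hθ (by rw [e2, e, mul_comm Real.pi, Real.sin_int_mul_pi, mul_zero])
      rw [e1, e, mul_left_comm] at this
      exact (mul_pos_iff_of_pos_left hρ).mp this
    have p1 := hpos a (Finset.mem_Icc.mpr ⟨le_rfl, by omega⟩)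
    have p2 := hpos (a + 1) (Finset.mem_Icc.mpr ⟨by omega, by omega⟩)
    push_cast at p2
    rw [mul_add, mul_one, Real.cos_add_pi] at p2
    linarith

lemma step_sum (f : MvPolynomial (Fin 2) ℝ) (hd : 1 ≤ f.totalDegree) (R : ℝ) (hR : 0 < R)
    (hcrit : ∀ r, R ≤ r → ∀ θ, ¬ (ev (pderiv 0 f) r θ = 0 ∧ ev (pderiv 1 f) r θ = 0))
    (B : ℝ × ℝ → ℝ) (hBc : Continuous B)
    (hB : ∀ s θ, R ≤ s → ∃ ρ : ℝ, 0 < ρ ∧ ev (Ep f) s θ = ρ * Real.cos (B (s, θ)) ∧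
        ev (Dp f) s θ = ρ * Real.sin (B (s, θ))) (α : ℝ) (S : Finset ℝ) :
    ∀ β, α ≤ β → (∀ θ ∈ Set.Icc α β,
      ev (homogeneousComponent f.totalDegree f) 1 θ = 0 ↔ θ ∈ S) →
      (∀ θ ∈ S, θ ∈ Set.Ioo α β) → ∀ a b, Lvl B α a → Lvl B β b → b - a ≤ ∑ z ∈ S, Jb f z := by
  induction S using Finset.induction_on_max with
  | empty =>
    intro β hαβ h1 _ a b ha hb
    have := lvl_const f hd R B hBc hB α β hαβ (fun θ hθ h0 => by simpa using (h1 θ hθ).mp h0) a ha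
    rw [this.unique hb]; simp
  | insert z S hmax ih =>
    intro β hαβ h1 h2 a b ha hb
    have hzS : z ∉ S := fun h => lt_irrefl _ (hmax z h)
    have hzI := h2 z (Finset.mem_insert_self _ _)
    have hz := (h1 z ⟨hzI.1.le, hzI.2.le⟩).mpr (Finset.mem_insert_self _ _)
    have hj := jump f hd R hR hcrit B hBc hB z hz
    have e1 : ∀ᶠ ε in nhdsWithin (0:ℝ) (Set.Ioi 0), ε < z - α :=
      (gt_mem_nhds (sub_pos.mpr hzI.1)).filter_mono nhdsWithin_le_nhds
    have e2 : ∀ᶠ ε in nhdsWithin (0:ℝ) (Set.Ioi 0), ε < β - z :=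
      (gt_mem_nhds (sub_pos.mpr hzI.2)).filter_mono nhdsWithin_le_nhds
    have e3 : ∀ᶠ ε in nhdsWithin (0:ℝ) (Set.Ioi 0), ∀ x ∈ S, ε < z - x := by
      rw [Filter.eventually_all_finset]
      intro x hx
      exact (gt_mem_nhds (sub_pos.mpr (hmax x hx))).filter_mono nhdsWithin_le_nhds
    obtain ⟨ε, ⟨hε, k1⟩, k2, k3, hε0⟩ := ((hj.and e1).and
      (e2.and (e3.and (self_mem_nhdsWithin (s := Set.Ioi (0:ℝ)))))).exists
    have hε0 : 0 < ε := hε0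
    have hQm : ev (homogeneousComponent f.totalDegree f) 1 (z - ε) ≠ 0 := by
      intro h
      rcases Finset.mem_insert.mp ((h1 _ ⟨by linarith, by linarith⟩).mp h) with h | h
      · linarith
      · linarith [k3 _ h]
    have hQp : ∀ θ ∈ Set.Icc (z + ε) β, ev (homogeneousComponent f.totalDegree f) 1 θ ≠ 0 := by
      intro θ hθ h
      rcases Finset.mem_insert.mp ((h1 _ ⟨by linarith [hθ.1], hθ.2⟩).mp h) with h | h
      · linarith [hθ.1]
      · linarith [hmax _ h, hθ.1]
    obtain ⟨n1, hn1⟩ := lvl_exists f hd R B hBc hB (z - ε) hQm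
    obtain ⟨n2, hn2⟩ := lvl_exists f hd R B hBc hB (z + ε) (hQp _ ⟨le_rfl, by linarith⟩)
    have hb2 := (lvl_const f hd R B hBc hB (z + ε) β (by linarith) hQp n2 hn2).unique hb
    have i1 := ih (z - ε) (by linarith) (by
      intro θ hθ
      rw [h1 θ ⟨hθ.1, by linarith [hθ.2]⟩, Finset.mem_insert, or_iff_right]
      intro h; linarith [hθ.2]) (by
      intro θ hθ
      exact ⟨(h2 θ (Finset.mem_insert_of_mem hθ)).1, by linarith [k3 θ hθ]⟩) a n1 ha hn1
    have i2 := hε n1 n2 hn1 hn2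
    rw [Finset.sum_insert hzS]
    omega


lemma isolated {n : ℕ} {Q : MvPolynomial (Fin 2) ℝ} (hQ : Q.IsHomogeneous n) (hQ0 : Q ≠ 0) (z : ℝ) :
    ∀ᶠ θ in nhdsWithin z {z}ᶜ, ev Q 1 θ ≠ 0 := by
  by_cases hz : ev Q 1 z = 0
  · filter_upwards [(sign_near hQ hQ0 z hz).filter_mono nhdsWithin_le_nhds,
      self_mem_nhdsWithin] with θ h1 h2 h0
    rw [h0, zero_mul] at h1
    rcases lt_or_gt_of_ne h2 with h | h
    · exact lt_irrefl _ (h1.2 h)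
    · exact lt_irrefl _ (h1.1 h)
  · exact (((continuous_ev_right Q 1).tendsto z).eventually_ne hz).filter_mono nhdsWithin_le_nhds

lemma zeros_finite {n : ℕ} {Q : MvPolynomial (Fin 2) ℝ} (hQ : Q.IsHomogeneous n) (hQ0 : Q ≠ 0)
    (a b : ℝ) : {θ | θ ∈ Set.Icc a b ∧ ev Q 1 θ = 0}.Finite := by
  by_contra hinf
  obtain ⟨x, -, hx⟩ := Set.Infinite.exists_accPt_of_subset_isCompact hinf
    (isCompact_Icc (a := a) (b := b)) (fun θ h => h.1)
  rw [accPt_iff_frequently_nhdsNE] at hx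
  exact hx ((isolated hQ hQ0 x).mono fun θ h h' => h h'.2)

lemma ev_add_pi {n : ℕ} {Q : MvPolynomial (Fin 2) ℝ} (hQ : Q.IsHomogeneous n) (θ : ℝ) :
    ev Q 1 (θ + Real.pi) = (-1) ^ n * ev Q 1 θ := by
  rw [← ev_hom hQ (-1) θ]
  simp [ev]

lemma ev_add_pi_zero {n : ℕ} {Q : MvPolynomial (Fin 2) ℝ} (hQ : Q.IsHomogeneous n) (θ : ℝ) :
    ev Q 1 (θ + Real.pi) = 0 ↔ ev Q 1 θ = 0 := by
  rw [ev_add_pi hQ, mul_eq_zero, or_iff_right (pow_ne_zero _ (by norm_num))]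

lemma dir_smul_aux (f : MvPolynomial (Fin 2) ℝ) (a b c : ℝ) (h : DirAtInfinity f a b) :
    DirAtInfinity f (c * a) (c * b) := by
  obtain ⟨t, z, h1, h2, h3⟩ := h
  refine ⟨t, z, h1, h2, ?_⟩
  have := h3.const_mul c
  rw [mul_zero] at this
  refine this.congr fun n => ?_
  ring

lemma dir_smul (f : MvPolynomial (Fin 2) ℝ) (a b c : ℝ) (hc : c ≠ 0) :
    DirAtInfinity f (c * a) (c * b) ↔ DirAtInfinity f a b := by
  constructor
  · intro h
    have := dir_smul_aux f _ _ c⁻¹ h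
    rwa [inv_mul_cancel_left₀ hc, inv_mul_cancel_left₀ hc] at this
  · exact dir_smul_aux f a b c

lemma Jb_add_pi (f : MvPolynomial (Fin 2) ℝ) (z : ℝ) : Jb f (z + Real.pi) = Jb f z := by
  have h1 : Real.cos (z + Real.pi) = (-1) * Real.cos z := by rw [Real.cos_add_pi]; ring
  have h2 : Real.sin (z + Real.pi) = (-1) * Real.sin z := by rw [Real.sin_add_pi]; ring
  unfold Jb
  rw [h1, h2, linMult_smul (by norm_num)]
  have e := propext (dir_smul f (Real.cos z) (Real.sin z) (-1) (by norm_num))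
  rw [e]

lemma polar (p : ℝ × ℝ) : ∃ θ ∈ Set.Icc (-Real.pi) Real.pi,
    p.1 = enorm2 p * Real.cos θ ∧ p.2 = enorm2 p * Real.sin θ := by
  have e : enorm2 p = ‖(⟨p.1, p.2⟩ : ℂ)‖ := by
    rw [Complex.norm_eq_sqrt_sq_add_sq]; rfl
  refine ⟨Complex.arg ⟨p.1, p.2⟩, ⟨(Complex.neg_pi_lt_arg _).le, Complex.arg_le_pi _⟩, ?_, ?_⟩
  · rw [e, Complex.norm_mul_cos_arg]
  · rw [e, Complex.norm_mul_sin_arg]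

lemma dir_zero (f : MvPolynomial (Fin 2) ℝ) (hd : 1 ≤ f.totalDegree) (z : ℝ)
    (h : DirAtInfinity f (Real.cos z) (Real.sin z)) :
    ev (homogeneousComponent f.totalDegree f) 1 z = 0 := by
  have hQ := homogeneousComponent_isHomogeneous f.totalDegree f
  set Q := homogeneousComponent f.totalDegree f with hQdef
  by_contra hne
  obtain ⟨t, p, h1, h2, h3⟩ := h
  choose θ hθ hx hy using fun n => polar (p n)
  obtain ⟨θ0, -, φ, hφ, hlim⟩ := isCompact_Icc.tendsto_subseq hθ
  have hr := h2.comp hφ.tendsto_atTop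
  have hs : Tendsto (fun n => Real.sin (z - θ (φ n))) atTop (nhds 0) := by
    have h4 := h3.comp hφ.tendsto_atTop
    refine h4.congr' ?_
    filter_upwards [hr.eventually (eventually_gt_atTop 0)] with n hn
    simp only [Function.comp] at hn ⊢
    rw [div_eq_iff hn.ne', Real.sin_sub]
    have a1 := hx (φ n)
    have a2 := hy (φ n)
    linear_combination Real.sin z * a1 - Real.cos z * a2
  have hs2 : Tendsto (fun n => Real.sin (z - θ (φ n))) atTop (nhds (Real.sin (z - θ0))) :=
    (Real.continuous_sin.tendsto _).comp (tendsto_const_nhds.sub hlim)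
  have hs3 : Real.sin (z - θ0) = 0 := tendsto_nhds_unique hs2 hs
  have hne0 : ev Q 1 θ0 ≠ 0 := by
    obtain ⟨k, hk⟩ := Real.sin_eq_zero_iff.mp hs3
    have hper : Function.Periodic (fun θ => ev Q 1 θ = 0) Real.pi := by
      intro θ; exact propext (ev_add_pi_zero hQ θ)
    have : (ev Q 1 (θ0 + k * Real.pi) = 0) = (ev Q 1 θ0 = 0) := hper.int_mul k θ0
    rw [show θ0 + k * Real.pi = z by linarith] at this
    intro h0
    exact hne (this.mpr h0)
  have hnb := ((continuous_ev_right Q 1).tendsto θ0).eventually_ne hne0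
  obtain ⟨δ, hδ, hδ2⟩ := Metric.nhds_basis_closedBall.eventually_iff.mp hnb
  have hK := asym_ne f hd (isCompact_closedBall θ0 δ) (fun θ hθ => hδ2 hθ) t
  have h5 := hlim.eventually (Metric.closedBall_mem_nhds θ0 hδ)
  obtain ⟨n, m1, m2⟩ := (h5.and (hr.eventually hK)).exists
  apply m2 _ m1
  have := h1 (φ n)
  rw [hx (φ n), hy (φ n)] at this
  exact this

lemma index_le_sum (f : MvPolynomial (Fin 2) ℝ) (hd : 1 ≤ f.totalDegree) (R : ℝ) (hR : 0 < R)
    (hcrit : ∀ r, R ≤ r → ∀ θ, ¬ (ev (pderiv 0 f) r θ = 0 ∧ ev (pderiv 1 f) r θ = 0))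
    (i : ℤ) (hi : (i : ℝ) = gradIndex f R) (S : Finset ℝ)
    (hS : ∀ θ, θ ∈ S ↔ θ ∈ Set.Ico 0 Real.pi ∧
      ev (homogeneousComponent f.totalDegree f) 1 θ = 0) :
    i - 1 ≤ ∑ z ∈ S, Jb f z := by
  have hQ0 := hcQ_ne f hd
  have hQ := homogeneousComponent_isHomogeneous f.totalDegree f
  set Q := homogeneousComponent f.totalDegree f with hQdef
  obtain ⟨B, hBc, hB, hper⟩ := exists_lift f R hR hcrit i hi
  have hpi := Real.pi_pos
  have hiso := isolated hQ hQ0 0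
  obtain ⟨δ0, hδ0, hδ2⟩ := Metric.eventually_nhds_iff.mp (eventually_nhdsWithin_iff.mp hiso)
  obtain ⟨δ, hδpos, hδlt⟩ := exists_between (lt_min hδ0 hpi)
  have hδ0' := hδlt.trans_le (min_le_left _ _)
  have hδπ := hδlt.trans_le (min_le_right _ _)
  have hnz : ∀ θ, -δ ≤ θ → θ < 0 → ev Q 1 θ ≠ 0 := by
    intro θ h1 h2
    exact hδ2 (by rw [Real.dist_eq, abs_lt]; constructor <;> linarith) h2.ne
  have hnz2 : ∀ θ, Real.pi - δ ≤ θ → θ < Real.pi → ev Q 1 θ ≠ 0 := by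
    intro θ h1 h2 h0
    refine hnz (θ - Real.pi) (by linarith) (by linarith) ?_
    rw [← ev_add_pi_zero hQ]; simpa using h0
  have c1 : ∀ θ ∈ Set.Icc (-δ) (-δ + Real.pi), ev Q 1 θ = 0 ↔ θ ∈ S := by
    intro θ hθ
    rw [hS]
    constructor
    · intro h0
      refine ⟨⟨?_, by linarith [hθ.2]⟩, h0⟩
      by_contra hlt
      exact hnz θ hθ.1 (not_le.mp hlt) h0
    · exact fun h => h.2
  have c2 : ∀ θ ∈ S, θ ∈ Set.Ioo (-δ) (-δ + Real.pi) := by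
    intro θ hθ
    obtain ⟨⟨h1, h2⟩, h3⟩ := (hS θ).mp hθ
    refine ⟨by linarith, ?_⟩
    by_contra hlt
    exact hnz2 θ (by linarith) h2 h3
  have q0 : ev Q 1 (-δ) ≠ 0 := hnz _ le_rfl (by linarith)
  have q1 : ev Q 1 (-δ + Real.pi) ≠ 0 := by rwa [Ne, ev_add_pi_zero hQ]
  obtain ⟨n0, hn0⟩ := lvl_exists f hd R B hBc hB (-δ) q0
  obtain ⟨n1, hn1⟩ := lvl_exists f hd R B hBc hB (-δ + Real.pi) q1
  have hn2 : Lvl B (-δ + Real.pi + Real.pi) (n0 + 2 * (i - 1)) := by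
    unfold Lvl at hn0 ⊢
    filter_upwards [hn0] with s hs
    rw [show -δ + Real.pi + Real.pi = -δ + 2 * Real.pi by ring, hper]
    push_cast
    convert! hs using 2
    ring
  have s1 := step_sum f hd R hR hcrit B hBc hB (-δ) S (-δ + Real.pi) (by linarith) c1 c2 n0 n1 hn0 hn1
  have s2 := step_sum f hd R hR hcrit B hBc hB (-δ + Real.pi) (S.image (fun z => z + Real.pi))
    (-δ + Real.pi + Real.pi) (by linarith) (by
      intro θ hθ
      have := c1 (θ - Real.pi) ⟨by linarith [hθ.1], by linarith [hθ.2]⟩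
      rw [← ev_add_pi_zero hQ, sub_add_cancel] at this
      rw [← hQdef, this, Finset.mem_image]
      constructor
      · intro h; exact ⟨_, h, by ring⟩
      · rintro ⟨x, hx, rfl⟩; simpa using hx) (by
      intro θ hθ
      obtain ⟨x, hx, rfl⟩ := Finset.mem_image.mp hθ
      have := c2 x hx
      exact ⟨by linarith [this.1], by linarith [this.2]⟩) n1 _ hn1 hn2
  rw [Finset.sum_image (fun x _ y _ h => by simpa using h)] at s2
  simp only [Jb_add_pi] at s2
  omega


/-- The angle of the direction `[a : 1]`. -/
noncomputable def zz (a : ℝ) : ℝ := Real.pi / 2 - Real.arctan a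

lemma zz_mem (a : ℝ) : 0 < zz a ∧ zz a < Real.pi := by
  unfold zz
  constructor <;> linarith [Real.arctan_lt_pi_div_two a, Real.neg_pi_div_two_lt_arctan a]

lemma zz_cos (a : ℝ) : Real.cos (zz a) = Real.cos (Real.arctan a) * a := by
  unfold zz
  rw [Real.cos_pi_div_two_sub]
  have h := Real.tan_eq_sin_div_cos (Real.arctan a)
  have hc := (Real.cos_arctan_pos a).ne'
  rw [Real.tan_arctan] at h
  rw [eq_div_iff hc] at h
  linarith

lemma zz_sin (a : ℝ) : Real.sin (zz a) = Real.cos (Real.arctan a) * 1 := by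
  unfold zz
  rw [Real.sin_pi_div_two_sub, mul_one]

lemma zz_dir (f : MvPolynomial (Fin 2) ℝ) (a : ℝ) :
    DirAtInfinity f (Real.cos (zz a)) (Real.sin (zz a)) ↔ DirAtInfinity f a 1 := by
  rw [zz_cos, zz_sin, dir_smul _ _ _ _ (Real.cos_arctan_pos a).ne']

lemma zz_mult (Q : MvPolynomial (Fin 2) ℝ) (a : ℝ) :
    linMult Q (Real.cos (zz a)) (Real.sin (zz a)) = linMult Q a 1 := by
  rw [zz_cos, zz_sin, linMult_smul (Real.cos_arctan_pos a).ne']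

lemma zz_inj : Function.Injective zz := by
  intro a b h
  unfold zz at h
  exact Real.arctan_injective (by linarith)

lemma zz_surj (z : ℝ) (h0 : 0 < z) (h1 : z < Real.pi) : ∃ a, zz a = z := by
  refine ⟨Real.tan (Real.pi / 2 - z), ?_⟩
  unfold zz
  rw [Real.arctan_tan (by linarith) (by linarith)]; ring

lemma sum_Jb (f : MvPolynomial (Fin 2) ℝ) (hd1 : 1 ≤ f.totalDegree)
    (hLfin : {a : ℝ | DirAtInfinity f a 1}.Finite) (S : Finset ℝ)
    (hS : ∀ θ, θ ∈ S ↔ θ ∈ Set.Ico 0 Real.pi ∧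
      ev (homogeneousComponent f.totalDegree f) 1 θ = 0) :
    ∑ z ∈ S, Jb f z = (tildeDR f f.totalDegree : ℤ) - 2 * (lSecond f : ℤ) := by
  classical
  have hpi := Real.pi_pos
  have e1 : ∑ z ∈ S, Jb f z = ∑ z ∈ hLfin.toFinset.image zz ∪
      (if DirAtInfinity f 1 0 then {0} else ∅), Jb f z := by
    symm
    apply Finset.sum_subset
    · intro z hz
      rw [hS]
      rcases Finset.mem_union.mp hz with h | h
      · obtain ⟨a, ha, rfl⟩ := Finset.mem_image.mp h
        have hm := zz_mem a
        refine ⟨⟨hm.1.le, hm.2⟩, dir_zero f hd1 _ ?_⟩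
        rw [zz_dir]
        simpa using ha
      · split_ifs at h with hD
        · rw [Finset.mem_singleton] at h
          subst h
          exact ⟨⟨le_rfl, hpi⟩, dir_zero f hd1 _ (by simpa using hD)⟩
        · simp at h
    · intro z hz hnz
      obtain ⟨⟨h0, h1⟩, -⟩ := (hS z).mp hz
      unfold Jb
      rw [if_neg]
      intro hD
      apply hnz
      rw [Finset.mem_union]
      rcases eq_or_lt_of_le h0 with h | h
      · right
        subst h
        rw [Real.cos_zero, Real.sin_zero] at hD
        rw [if_pos hD]; simp
      · left
        obtain ⟨a, rfl⟩ := zz_surj z h h1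
        rw [zz_dir] at hD
        exact Finset.mem_image_of_mem _ (by simpa using hD)
  have hdisj : Disjoint (hLfin.toFinset.image zz)
      (if DirAtInfinity f 1 0 then {0} else ∅) := by
    split_ifs with hD
    · rw [Finset.disjoint_singleton_right]
      intro h
      obtain ⟨a, -, ha⟩ := Finset.mem_image.mp h
      exact (zz_mem a).1.ne' ha
    · exact Finset.disjoint_empty_right _
  rw [e1, Finset.sum_union hdisj, Finset.sum_image (fun x _ y _ h => zz_inj h)]
  have e2 : ∑ a ∈ hLfin.toFinset, Jb f (zz a) = ∑ a ∈ hLfin.toFinset,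
      ((linMult (homogeneousComponent f.totalDegree f) a 1 : ℤ) - 2) := by
    refine Finset.sum_congr rfl fun a ha => ?_
    unfold Jb
    rw [if_pos ((zz_dir f a).mpr (by simpa using ha)), zz_mult]
  have e3 : ∑ᶠ a ∈ {a : ℝ | DirAtInfinity f a 1},
      linMult (homogeneousComponent f.totalDegree f) a 1 = ∑ a ∈ hLfin.toFinset,
      linMult (homogeneousComponent f.totalDegree f) a 1 :=
    finsum_mem_eq_finite_toFinset_sum _ hLfin
  have e4 : {a : ℝ | DirAtInfinity f a 1}.ncard = hLfin.toFinset.card :=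
    Set.ncard_eq_toFinset_card _ hLfin
  have e5 : ∑ z ∈ (if DirAtInfinity f 1 0 then ({0} : Finset ℝ) else ∅), Jb f z =
      ((if DirAtInfinity f 1 0 then
        linMult (homogeneousComponent f.totalDegree f) 1 0 else 0 : ℕ) : ℤ) -
      2 * ((if DirAtInfinity f 1 0 then 1 else 0 : ℕ) : ℤ) := by
    by_cases hD : DirAtInfinity f 1 0
    · simp only [if_pos hD, Finset.sum_singleton]
      unfold Jb
      rw [Real.cos_zero, Real.sin_zero, if_pos hD]; simp
    · simp [if_neg hD]
  rw [e2, e5, tildeDR, lSecond, e3, e4, Finset.sum_sub_distrib]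
  simp only [Finset.sum_const, nsmul_eq_mul]
  push_cast
  ring

theorem index_le_one_add_tildeDR_sub_two_lSecond
    (f : MvPolynomial (Fin 2) ℝ) (d : ℕ) (hd : f.totalDegree = d) (hd1 : 1 ≤ d)
    (hfin : {p : ℝ × ℝ | IsCriticalPt f p}.Finite)
    (hLfin : {a : ℝ | DirAtInfinity f a 1}.Finite)
    (R : ℝ) (hR : 0 < R)
    (hadm : ∀ p : ℝ × ℝ, IsCriticalPt f p → p.1 ^ 2 + p.2 ^ 2 < R ^ 2)
    (i : ℤ) (hi : (i : ℝ) = gradIndex f R) :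
    i ≤ 1 + (tildeDR f d : ℤ) - 2 * (lSecond f : ℤ) := by
  subst hd
  have hcrit : ∀ r, R ≤ r → ∀ θ,
      ¬ (ev (pderiv 0 f) r θ = 0 ∧ ev (pderiv 1 f) r θ = 0) := by
    intro r hr θ h
    have := hadm (r * Real.cos θ, r * Real.sin θ) h
    simp only at this
    have h2 : (r * Real.cos θ) ^ 2 + (r * Real.sin θ) ^ 2 = r ^ 2 := by
      linear_combination r ^ 2 * Real.sin_sq_add_cos_sq θ
    rw [h2] at this
    nlinarith
  have hZ := zeros_finite (homogeneousComponent_isHomogeneous f.totalDegree f) (hcQ_ne f hd1)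
    0 Real.pi
  have hS : ∀ θ, θ ∈ hZ.toFinset.filter (fun θ => θ < Real.pi) ↔ θ ∈ Set.Ico 0 Real.pi ∧
      ev (homogeneousComponent f.totalDegree f) 1 θ = 0 := by
    intro θ
    rw [Finset.mem_filter, Set.Finite.mem_toFinset]
    constructor
    · rintro ⟨⟨h1, h2⟩, h3⟩; exact ⟨⟨h1.1, h3⟩, h2⟩
    · rintro ⟨h1, h2⟩; exact ⟨⟨⟨h1.1, h1.2.le⟩, h2⟩, h1.2⟩
  have h1 := index_le_sum f hd1 R hR hcrit i hi _ hS
  rw [sum_Jb f hd1 hLfin _ hS] at h1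
  omega
end

section
/- Let f : ℝ² → ℝ be a nonconstant real polynomial function of degree d in two variables with only finitely many critical points. Then for every admissible radius R the index i of grad f around the circle of radius R satisfies i ≥ 1 − d_R, where d_R is the real degree of f. -/
open MvPolynomial Filter

namespace GI

noncomputable def lin (a b : ℝ) : MvPolynomial (Fin 2) ℝ := C b * X 0 - C a * X 1

lemma lin_hom (a b : ℝ) : (lin a b).IsHomogeneous 1 :=
  (isHomogeneous_C_mul_X b 0).sub (isHomogeneous_C_mul_X a 1)

lemma hc_mul {L Q : MvPolynomial (Fin 2) ℝ} (hL : L.IsHomogeneous 1) (k : ℕ) :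
    homogeneousComponent (k + 1) (L * Q) = L * homogeneousComponent k Q := by
  conv_lhs => rw [← sum_homogeneousComponent Q, Finset.mul_sum, map_sum]
  have : ∀ i ∈ Finset.range (Q.totalDegree + 1),
      homogeneousComponent (k + 1) (L * homogeneousComponent i Q) =
      if i = k then L * homogeneousComponent k Q else 0 := by
    intro i _
    have h : (L * homogeneousComponent i Q).IsHomogeneous (1 + i) :=
      hL.mul (homogeneousComponent_isHomogeneous i Q)
    rw [homogeneousComponent_of_mem h]
    by_cases hik : i = k
    · subst hik; rw [if_pos (by omega), if_pos rfl]
    · rw [if_neg (by omega), if_neg hik]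
  rw [Finset.sum_congr rfl this, Finset.sum_ite_eq']
  split_ifs with hk
  · rfl
  · rw [homogeneousComponent_eq_zero, mul_zero]
    simpa using hk

lemma aeval_smul_hom {A : Type*} [CommRing A] [Algebra ℝ A] {F : MvPolynomial (Fin 2) ℝ} {k : ℕ}
    (hF : F.IsHomogeneous k) (c : Fin 2 → ℝ) (y : A) :
    aeval (fun i => algebraMap ℝ A (c i) * y) F = algebraMap ℝ A (eval c F) * y ^ k := by
  rw [aeval_def, eval₂_eq', eval_eq', map_sum, Finset.sum_mul]
  refine Finset.sum_congr rfl fun m hm => ?_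
  have hdeg : ∑ i, m i = k := by
    have := hF.degree_eq_sum_deg_support hm
    rw [this]
    exact (Finset.sum_subset (Finset.subset_univ _) (fun i _ hi => by simpa using hi)).symm
  rw [← hdeg]
  simp only [mul_pow, Finset.prod_mul_distrib, Finset.prod_pow_eq_pow_sum, map_mul, map_prod, map_pow]
  ring

lemma lin_dvd {F : MvPolynomial (Fin 2) ℝ} {k : ℕ} (hF : F.IsHomogeneous k) {a b : ℝ}
    (hab : a ^ 2 + b ^ 2 = 1) (h0 : evalP F a b = 0) : lin a b ∣ F := by
  rw [← Ideal.mem_span_singleton, ← Ideal.Quotient.eq_zero_iff_mem]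
  set I : Ideal (MvPolynomial (Fin 2) ℝ) := Ideal.span {lin a b} with hI
  let π := Ideal.Quotient.mkₐ ℝ I
  have hL : π (lin a b) = 0 := by
    simp only [π, Ideal.Quotient.mkₐ_eq_mk]
    rw [Ideal.Quotient.eq_zero_iff_mem]
    exact Ideal.subset_span rfl
  have hC : (C a ^ 2 + C b ^ 2 : MvPolynomial (Fin 2) ℝ) = 1 := by
    rw [← C_pow, ← C_pow, ← C_add, hab, C_1]
  set y := π (C a * X 0 + C b * X 1) with hy
  have h1 : ∀ i, π (X i) = algebraMap ℝ _ (![a, b] i) * y := by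
    intro i
    have hx0 : (X 0 : MvPolynomial (Fin 2) ℝ) = C a * (C a * X 0 + C b * X 1) + C b * lin a b := by
      unfold lin; linear_combination (-X 0) * hC
    have hx1 : (X 1 : MvPolynomial (Fin 2) ℝ) = C b * (C a * X 0 + C b * X 1) - C a * lin a b := by
      unfold lin; linear_combination (-X 1) * hC
    have hCa : ∀ c : ℝ, π (C c) = algebraMap ℝ _ c := fun c => by
      rw [← algebraMap_eq]; exact π.commutes c
    fin_cases i
    · simp only [Fin.zero_eta]
      conv_lhs => rw [hx0]
      rw [map_add, map_mul, map_mul, hL, hCa]; simp [hy]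
    · simp only [Fin.mk_one]
      conv_lhs => rw [hx1]
      rw [map_sub, map_mul, map_mul, hL, hCa]; simp [hy]
  have h2 : π F = aeval (fun i => algebraMap ℝ _ (![a, b] i) * y) F := by
    have : (fun i => algebraMap ℝ _ (![a, b] i) * y) = fun i => π (X i) := by
      funext i; rw [h1 i]
    rw [this]
    conv_lhs => rw [aeval_unique π]
    rfl
  have h3 := aeval_smul_hom hF ![a, b] y
  have : π F = 0 := by
    rw [h2, h3]
    unfold evalP at h0
    rw [h0]; simp
  exact this

lemma exists_factor (k : ℕ) : ∀ {F : MvPolynomial (Fin 2) ℝ}, F.IsHomogeneous k → F ≠ 0 →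
    ∀ {a b : ℝ}, a ^ 2 + b ^ 2 = 1 →
    ∃ (m : ℕ) (Q : MvPolynomial (Fin 2) ℝ), F = lin a b ^ m * Q ∧ evalP Q a b ≠ 0 := by
  induction k with
  | zero =>
    intro F hF h0 a b hab
    refine ⟨0, F, by simp, fun h => h0 ?_⟩
    have h1 : F = C (coeff 0 F) := by
      rw [← totalDegree_eq_zero_iff_eq_C]
      exact Nat.le_zero.mp hF.totalDegree_le
    rw [h1] at h ⊢
    unfold evalP at h
    rw [eval_C] at h
    rw [h, C_0]
  | succ k ih =>
    intro F hF h0 a b hab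
    by_cases h : evalP F a b = 0
    · obtain ⟨Q, hQ⟩ := lin_dvd hF hab h
      have h2 : F = lin a b * homogeneousComponent k Q := by
        rw [← hc_mul (lin_hom a b), ← hQ, homogeneousComponent_eq_self hF]
      obtain ⟨m, Q', hQ', hne⟩ := ih (homogeneousComponent_isHomogeneous k Q)
        (fun h => h0 (by rw [h2, h, mul_zero])) hab
      exact ⟨m + 1, Q', by rw [h2, hQ']; ring, hne⟩
    · exact ⟨0, F, by simp, h⟩

lemma lin_eval (a b x y : ℝ) : evalP (lin a b) x y = b * x - a * y := by
  simp [evalP, lin]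

lemma lin_not_unit {a b : ℝ} : ¬ IsUnit (lin a b) := by
  intro h
  have := h.map (eval ![a, b])
  have h2 : eval ![a,b] (lin a b) = 0 := by
    have := lin_eval a b a b
    unfold evalP at this; rw [this]; ring
  rw [h2] at this
  exact not_isUnit_zero this

lemma le_linMult {F : MvPolynomial (Fin 2) ℝ} (hF : F ≠ 0) {a b : ℝ} {m : ℕ}
    (h : lin a b ^ m ∣ F) : m ≤ linMult F a b := by
  unfold linMult
  refine le_csSup ?_ h
  obtain ⟨n, hn⟩ := FiniteMultiplicity.of_not_isUnit (a := lin a b) lin_not_unit hF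
  refine ⟨n, fun m hm => ?_⟩
  by_contra hlt
  exact hn ((pow_dvd_pow _ (by omega)).trans hm)

lemma linMult_scale {F : MvPolynomial (Fin 2) ℝ} {a b c : ℝ} (hc : c ≠ 0) :
    linMult F (c * a) (c * b) = linMult F a b := by
  unfold linMult
  congr 1
  ext m
  have : (C (c * b) * X 0 - C (c * a) * X 1 : MvPolynomial (Fin 2) ℝ) ^ m =
      C (c ^ m) * (C b * X 0 - C a * X 1) ^ m := by
    rw [C_pow, ← mul_pow, C_mul, C_mul]; congr 1; ring
  simp only [Set.mem_ofPred_eq, this]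
  have hu : IsUnit (C (c ^ m) : MvPolynomial (Fin 2) ℝ) :=
    (isUnit_iff_ne_zero.mpr (pow_ne_zero m hc)).map C
  exact hu.mul_left_dvd

lemma linMult_pos {F : MvPolynomial (Fin 2) ℝ} {a b : ℝ} (h : linMult F a b ≠ 0) :
    evalP F a b = 0 := by
  by_contra hne
  apply h
  unfold linMult
  have : {m : ℕ | (C b * X 0 - C a * X 1) ^ m ∣ F} ⊆ {0} := by
    intro m hm
    by_contra hm0
    have h1 : lin a b ∣ F := (dvd_pow_self _ hm0).trans hm
    obtain ⟨Q, rfl⟩ := h1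
    apply hne
    have := lin_eval a b a b
    unfold evalP at this ⊢
    rw [map_mul, this]; ring
  have h2 : sSup {m : ℕ | (C b * X 0 - C a * X 1) ^ m ∣ F} ∈ {m : ℕ | (C b * X 0 - C a * X 1) ^ m ∣ F} := by
    apply Nat.sSup_mem
    · exact ⟨0, by simp⟩
    · exact ⟨0, fun m hm => by simpa using this hm⟩
  exact this h2

/-- homogeneous scaling -/
lemma evalP_scale {F : MvPolynomial (Fin 2) ℝ} {k : ℕ} (hF : F.IsHomogeneous k) (r x y : ℝ) :
    evalP F (r * x) (r * y) = r ^ k * evalP F x y := by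
  have := aeval_smul_hom (A := ℝ) hF ![x, y] r
  simp only [Algebra.algebraMap_self, RingHom.id_apply] at this
  unfold evalP
  rw [mul_comm (r ^ k), ← this]
  have h : ![r * x, r * y] = fun i => ![x, y] i * r := by
    funext i; fin_cases i <;> simp [mul_comm]
  rw [h]; rfl

lemma finite_support {F : MvPolynomial (Fin 2) ℝ} {k : ℕ} (hF : F.IsHomogeneous k) (h0 : F ≠ 0) :
    (Function.support fun a : ℝ => linMult F a 1).Finite := by
  let P : Polynomial ℝ := aeval ![Polynomial.X, 1] F
  have hP : ∀ x, P.eval x = evalP F x 1 := by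
    intro x
    have : (Polynomial.aeval x).comp (aeval ![Polynomial.X, (1 : Polynomial ℝ)]) = aeval ![x, 1] := by
      apply MvPolynomial.algHom_ext
      intro i; fin_cases i <;> simp
    have h2 := congrArg (fun φ => φ F) this
    simp only [AlgHom.comp_apply] at h2
    rw [← Polynomial.coe_aeval_eq_eval]
    exact h2
  have hP0 : P ≠ 0 := by
    intro hz
    apply h0
    have : F * X 1 = 0 := by
      apply MvPolynomial.funext
      intro v
      simp only [map_mul, eval_X, map_zero]
      by_cases hv : v 1 = 0
      · rw [hv, mul_zero]
      · have h1 : evalP F (v 1 * (v 0 / v 1)) (v 1 * 1) = 0 := by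
          rw [evalP_scale hF, ← hP, hz]; simp
        have h2 : ![v 1 * (v 0 / v 1), v 1 * 1] = v := by
          funext i; fin_cases i
          · simp; field_simp
          · simp
        unfold evalP at h1
        rw [h2] at h1; rw [h1, zero_mul]
    rcases mul_eq_zero.mp this with h | h
    · exact h
    · exact absurd h (X_ne_zero 1)
  refine Set.Finite.subset (P.roots.toFinset.finite_toSet) ?_
  intro a ha
  have := linMult_pos ha
  simp [hP0, hP, this]

/-- The sum of multiplicities over distinct directions is at most the real degree. -/
lemma sum_linMult_le {F : MvPolynomial (Fin 2) ℝ} {k : ℕ} (hF : F.IsHomogeneous k) (h0 : F ≠ 0)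
    (α : ℝ) (Z : Finset ℝ) (hZ : ∀ t ∈ Z, t ∈ Set.Ioo α (α + Real.pi)) :
    ∑ t ∈ Z, linMult F (Real.cos t) (Real.sin t) ≤ realDegreeOf F := by
  classical
  have inj : ∀ s ∈ Z, ∀ t ∈ Z, Real.sin (s - t) = 0 → s = t := by
    intro s hs t ht h
    have h1 := hZ s hs
    have h2 := hZ t ht
    have := (Real.sin_eq_zero_iff_of_lt_of_lt (x := s - t) (by linarith [h1.1, h2.2])
      (by linarith [h1.2, h2.1])).mp h
    linarith
  rw [← Finset.sum_filter_add_sum_filter_not Z (fun t => Real.sin t ≠ 0)]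
  unfold realDegreeOf
  apply add_le_add
  · rw [finsum_eq_sum_of_support_subset_of_finite _ subset_rfl (finite_support hF h0)]
    have hm : ∀ t ∈ Z.filter (fun t => Real.sin t ≠ 0),
        linMult F (Real.cos t) (Real.sin t) = linMult F (Real.cos t / Real.sin t) 1 := by
      intro t ht
      have hs := (Finset.mem_filter.mp ht).2
      rw [← linMult_scale hs (a := Real.cos t / Real.sin t) (b := 1)]
      congr 1 <;> field_simp
    rw [Finset.sum_congr rfl hm,
      ← Finset.sum_image (s := Z.filter (fun t => Real.sin t ≠ 0))
        (g := fun t => Real.cos t / Real.sin t) (f := fun a => linMult F a 1)]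
    · apply Finset.sum_le_sum_of_ne_zero
      intro x _ hx
      simpa using hx
    · intro s hs t ht hst
      simp only [Finset.coe_filter, Set.mem_ofPred_eq] at hs ht
      apply inj s hs.1 t ht.1
      have h1 := hs.2
      have h2 := ht.2
      simp only at hst
      rw [div_eq_div_iff h1 h2] at hst
      rw [Real.sin_sub]; linarith
  · have hcard : (Z.filter (fun t => ¬ Real.sin t ≠ 0)).card ≤ 1 := by
      rw [Finset.card_le_one]
      intro s hs t ht
      simp only [Finset.mem_filter, not_not] at hs ht
      apply inj s hs.1 t ht.1
      rw [Real.sin_sub, hs.2, ht.2]; ring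
    have hval : ∀ t ∈ Z.filter (fun t => ¬ Real.sin t ≠ 0),
        linMult F (Real.cos t) (Real.sin t) = linMult F 1 0 := by
      intro t ht
      simp only [Finset.mem_filter, not_not] at ht
      have hc : Real.cos t ≠ 0 := by
        intro h
        have := Real.sin_sq_add_cos_sq t
        rw [h, ht.2] at this; norm_num at this
      rw [← linMult_scale hc (a := 1) (b := 0), ht.2]; simp
    rw [Finset.sum_congr rfl hval, Finset.sum_const, smul_eq_mul]
    calc _ ≤ 1 * linMult F 1 0 := Nat.mul_le_mul_right _ hcard
      _ = _ := one_mul _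

end GI

namespace GI
open Topology

lemma rolle_finset {g g' : ℝ → ℝ} (hg : ∀ t, HasDerivAt g (g' t) t) (Z : Finset ℝ) :
    (∀ t ∈ Z, g t = 0) → ∃ Z' : Finset ℝ, Z.card ≤ Z'.card + 1 ∧
      ∀ z ∈ Z', g' z = 0 ∧ ∃ x ∈ Z, ∃ y ∈ Z, x < z ∧ z < y := by
  classical
  induction Z using Finset.induction_on_max with
  | empty => intro _; exact ⟨∅, by simp, by simp⟩
  | insert c Z hc ih =>
    intro hz
    obtain ⟨Z', h1, h2⟩ := ih (fun t ht => hz t (Finset.mem_insert_of_mem ht))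
    rcases Z.eq_empty_or_nonempty with rfl | hne
    · exact ⟨∅, by simp, by simp⟩
    have hM := Z.max'_mem hne
    obtain ⟨z, hz1, hz2⟩ := exists_hasDerivAt_eq_zero (f := g) (f' := g') (hc _ hM)
      (fun t _ => (hg t).continuousAt.continuousWithinAt)
      (by rw [hz _ (Finset.mem_insert_of_mem hM), hz c (Finset.mem_insert_self _ _)])
      (fun t _ => hg t)
    have hzn : z ∉ Z' := by
      intro h
      obtain ⟨_, _, _, y, hy, _, hlt⟩ := h2 z h
      have := Z.le_max' y hy
      linarith [hz1.1]
    refine ⟨insert z Z', ?_, ?_⟩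
    · have : c ∉ Z := fun h => lt_irrefl _ (hc c h)
      rw [Finset.card_insert_of_notMem this, Finset.card_insert_of_notMem hzn]; omega
    · intro w hw
      rcases Finset.mem_insert.mp hw with rfl | hw
      · exact ⟨hz2, _, Finset.mem_insert_of_mem hM, c, Finset.mem_insert_self _ _, hz1.1, hz1.2⟩
      · obtain ⟨e, x, hx, y, hy, h⟩ := h2 w hw
        exact ⟨e, x, Finset.mem_insert_of_mem hx, y, Finset.mem_insert_of_mem hy, h⟩

lemma zeros_le (m : ℕ) : ∀ {h : ℕ → ℝ → ℝ}, (∀ n t, HasDerivAt (h n) (h (n + 1) t) t) →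
    ∀ {U : Set ℝ}, U.OrdConnected → (∀ t ∈ U, h m t ≠ 0) →
    ∀ Z : Finset ℝ, (∀ t ∈ Z, t ∈ U ∧ h 0 t = 0) → Z.card ≤ m := by
  induction m with
  | zero =>
    intro h _ U _ hU Z hZ
    rw [Nat.le_zero, Finset.card_eq_zero, Finset.eq_empty_iff_forall_notMem]
    exact fun t ht => hU t (hZ t ht).1 (hZ t ht).2
  | succ m ih =>
    intro h hd U hUc hU Z hZ
    obtain ⟨Z', h1, h2⟩ := rolle_finset (hd 0) Z (fun t ht => (hZ t ht).2)
    have := ih (h := fun n => h (n + 1)) (fun n t => hd (n + 1) t) hUc hU Z' (by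
      intro z hz
      obtain ⟨e, x, hx, y, hy, hlt⟩ := h2 z hz
      exact ⟨hUc.out (hZ x hx).1 (hZ y hy).1 ⟨hlt.1.le, hlt.2.le⟩, e⟩)
    omega

lemma zeros_family {G : ℕ → ℝ → ℝ → ℝ} (hd : ∀ s n t, HasDerivAt (G n s) (G (n + 1) s t) t)
    (hc : ∀ n, Continuous fun x : ℝ × ℝ => G n x.1 x.2) {a b : ℝ} (W : Finset ℝ) (μ : ℝ → ℕ)
    (hW : ∀ t ∈ Set.Icc a b, μ t ≠ 0 → t ∈ W)
    (hμ : ∀ t ∈ Set.Icc a b, ∃ m ≤ μ t, G m 0 t ≠ 0) :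
    ∀ᶠ s in 𝓝 (0 : ℝ), ∀ Z : Finset ℝ, (∀ t ∈ Z, t ∈ Set.Icc a b ∧ G 0 s t = 0) →
      Z.card ≤ ∑ t ∈ W, μ t := by
  classical
  have hloc : ∀ t ∈ Set.Icc a b, ∃ U ∈ 𝓝 t, ∀ᶠ s in 𝓝 (0 : ℝ), ∀ Z : Finset ℝ,
      (∀ τ ∈ Z, τ ∈ U ∧ G 0 s τ = 0) → Z.card ≤ μ t := by
    intro t ht
    obtain ⟨m, hm, hne⟩ := hμ t ht
    have h1 : ∀ᶠ x : ℝ × ℝ in 𝓝 (0, t), G m x.1 x.2 ≠ 0 :=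
      (hc m).continuousAt.eventually_ne hne
    rw [nhds_prod_eq, Filter.eventually_prod_iff] at h1
    obtain ⟨pa, hpa, pb, hpb, hp⟩ := h1
    obtain ⟨ε, hε, hball⟩ := Metric.eventually_nhds_iff_ball.mp hpb
    refine ⟨Metric.ball t ε, Metric.ball_mem_nhds t hε, ?_⟩
    filter_upwards [hpa] with s hs Z hZ
    refine le_trans (zeros_le m (h := fun n => G n s) (hd s) (U := Metric.ball t ε) ?_ ?_ Z hZ) hm
    · exact (convex_ball t ε).ordConnected
    · exact fun τ hτ => hp hs (hball τ hτ)
  choose! U hU hev using hloc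
  obtain ⟨T, hT, hcov⟩ := isCompact_Icc.elim_nhds_subcover U hU
  have hev' : ∀ᶠ s in 𝓝 (0 : ℝ), ∀ t ∈ T, ∀ Z : Finset ℝ,
      (∀ τ ∈ Z, τ ∈ U t ∧ G 0 s τ = 0) → Z.card ≤ μ t := by
    rw [Filter.eventually_all_finset]
    exact fun t ht => hev t (hT t ht)
  filter_upwards [hev'] with s hs Z hZ
  have hsub : Z ⊆ T.biUnion fun t => Z.filter (· ∈ U t) := by
    intro z hz
    have := hcov (hZ z hz).1
    simp only [Set.mem_iUnion] at this
    obtain ⟨t, ht, hzt⟩ := this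
    exact Finset.mem_biUnion.mpr ⟨t, ht, Finset.mem_filter.mpr ⟨hz, hzt⟩⟩
  calc Z.card ≤ _ := Finset.card_le_card hsub
    _ ≤ ∑ t ∈ T, (Z.filter (· ∈ U t)).card := Finset.card_biUnion_le
    _ ≤ ∑ t ∈ T, μ t := Finset.sum_le_sum fun t ht => hs t ht _ fun τ hτ => by
        rw [Finset.mem_filter] at hτ
        exact ⟨hτ.2, (hZ τ hτ.1).2⟩
    _ ≤ ∑ t ∈ W, μ t := Finset.sum_le_sum_of_ne_zero fun t ht h => hW t (hT t ht) h

section arcs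
variable {p q p' q' Φ : ℝ → ℝ}

lemma arc (hp : ∀ t, HasDerivAt p (p' t) t) (hq : ∀ t, HasDerivAt q (q' t) t)
    (hΦ : ∀ t, HasDerivAt Φ ((p t * q' t - q t * p' t) / (p t ^ 2 + q t ^ 2)) t)
    {a b : ℝ} (hab : a < b) (hne : ∀ t ∈ Set.Ioo a b, p t ≠ 0) :
    |Φ b - Φ a| ≤ Real.pi := by
  have hD : ∀ t ∈ Set.Ioo a b, HasDerivAt (fun t => Φ t - Real.arctan (q t / p t)) 0 t := by
    intro t ht
    have hpt := hne t ht
    have h1 := (hΦ t).sub (((hq t).div (hp t) hpt).arctan)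
    convert! h1 using 1
    have h2 : p t ^ 2 + q t ^ 2 ≠ 0 := by positivity
    have h3 : 1 + (q t / p t) ^ 2 ≠ 0 := by positivity
    simp only [Pi.div_apply]
    field_simp
    ring
  have key : ∀ x ∈ Set.Ioo a b, ∀ y ∈ Set.Ioo a b, |Φ y - Φ x| ≤ Real.pi := by
    intro x hx y hy
    have := (convex_Ioo a b).is_const_of_fderivWithin_eq_zero (𝕜 := ℝ)
      (f := fun t => Φ t - Real.arctan (q t / p t))
      (fun t ht => (hD t ht).differentiableAt.differentiableWithinAt)
      (fun t ht => by
        rw [fderivWithin_of_isOpen isOpen_Ioo ht]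
        ext
        simpa using (hD t ht).deriv) hx hy
    have e : Φ y - Φ x = Real.arctan (q y / p y) - Real.arctan (q x / p x) := by linarith
    rw [e, abs_le]
    constructor <;> linarith [Real.arctan_lt_pi_div_two (q y / p y), Real.arctan_lt_pi_div_two (q x / p x),
      Real.neg_pi_div_two_lt_arctan (q y / p y), Real.neg_pi_div_two_lt_arctan (q x / p x)]
  have hΦc : Continuous Φ := continuous_iff_continuousAt.mpr fun t => (hΦ t).continuousAt
  have hcl : IsClosed {x : ℝ × ℝ | |Φ x.2 - Φ x.1| ≤ Real.pi} :=
    isClosed_le (by fun_prop) continuous_const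
  have hsub : Set.Ioo a b ×ˢ Set.Ioo a b ⊆ {x : ℝ × ℝ | |Φ x.2 - Φ x.1| ≤ Real.pi} :=
    fun x hx => key x.1 hx.1 x.2 hx.2
  have := hcl.closure_subset_iff.mpr hsub
  rw [closure_prod_eq, closure_Ioo hab.ne] at this
  exact this (a := (a, b)) ⟨⟨le_rfl, hab.le⟩, ⟨hab.le, le_rfl⟩⟩

lemma arcs (hp : ∀ t, HasDerivAt p (p' t) t) (hq : ∀ t, HasDerivAt q (q' t) t)
    (hΦ : ∀ t, HasDerivAt Φ ((p t * q' t - q t * p' t) / (p t ^ 2 + q t ^ 2)) t)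
    {a : ℝ} (Z : Finset ℝ) : ∀ b, a < b → (∀ t ∈ Set.Ioo a b, p t = 0 → t ∈ Z) →
    |Φ b - Φ a| ≤ (Z.card + 1) * Real.pi := by
  classical
  induction Z using Finset.induction_on_max with
  | empty =>
    intro b hab h
    simpa using arc hp hq hΦ hab (fun t ht h0 => by simpa using h t ht h0)
  | insert c Z hc ih =>
    intro b hab h
    have hcn : c ∉ Z := fun h => lt_irrefl _ (hc c h)
    rw [Finset.card_insert_of_notMem hcn]
    push_cast
    have hpi := Real.pi_pos
    by_cases hcab : c ∈ Set.Ioo a b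
    · have h1 := ih c hcab.1 (fun t ht h0 => by
        rcases Finset.mem_insert.mp (h t ⟨ht.1, ht.2.trans hcab.2⟩ h0) with rfl | h
        · exact absurd ht.2 (lt_irrefl _)
        · exact h)
      have h2 := arc hp hq hΦ hcab.2 (fun t ht h0 => by
        rcases Finset.mem_insert.mp (h t ⟨hcab.1.trans ht.1, ht.2⟩ h0) with rfl | h
        · exact absurd ht.1 (lt_irrefl _)
        · exact lt_asymm ht.1 (hc t h))
      have : Φ b - Φ a = (Φ b - Φ c) + (Φ c - Φ a) := by ring
      rw [this]
      refine (abs_add_le _ _).trans ?_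
      linarith
    · have h1 := ih b hab (fun t ht h0 => by
        rcases Finset.mem_insert.mp (h t ht h0) with rfl | h
        · exact absurd ht hcab
        · exact h)
      linarith
end arcs

lemma winding_int {u v u' v' : ℝ → ℝ} (hu : ∀ t, HasDerivAt u (u' t) t)
    (hv : ∀ t, HasDerivAt v (v' t) t) (hu' : Continuous u') (hv' : Continuous v')
    (hne : ∀ t, u t ^ 2 + v t ^ 2 ≠ 0) {T : ℝ} (hpu : u T = u 0) (hpv : v T = v 0) :
    ∃ n : ℤ, ∫ t in (0:ℝ)..T, (u t * v' t - v t * u' t) / (u t ^ 2 + v t ^ 2) = n * (2 * Real.pi) := by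
  have huc : Continuous u := continuous_iff_continuousAt.mpr fun t => (hu t).continuousAt
  have hvc : Continuous v := continuous_iff_continuousAt.mpr fun t => (hv t).continuousAt
  let A : ℝ → ℝ := fun t => (u t * v' t - v t * u' t) / (u t ^ 2 + v t ^ 2)
  let B : ℝ → ℝ := fun t => (u t * u' t + v t * v' t) / (u t ^ 2 + v t ^ 2)
  have hA : Continuous A := by
    apply Continuous.div <;> first | fun_prop | exact hne
  have hB : Continuous B := by
    apply Continuous.div <;> first | fun_prop | exact hne
  let ΦA : ℝ → ℝ := fun x => ∫ t in (0:ℝ)..x, A t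
  let ΦB : ℝ → ℝ := fun x => ∫ t in (0:ℝ)..x, B t
  have hΦA : ∀ x, HasDerivAt ΦA (A x) x := fun x =>
    intervalIntegral.integral_hasDerivAt_right (hA.intervalIntegrable _ _)
      (hA.stronglyMeasurableAtFilter _ _) hA.continuousAt
  have hΦB : ∀ x, HasDerivAt ΦB (B x) x := fun x =>
    intervalIntegral.integral_hasDerivAt_right (hB.intervalIntegrable _ _)
      (hB.stronglyMeasurableAtFilter _ _) hB.continuousAt
  let z : ℝ → ℂ := fun t => (u t : ℂ) + (v t : ℂ) * Complex.I
  let w : ℝ → ℂ := fun t => (ΦB t : ℂ) + (ΦA t : ℂ) * Complex.I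
  have hz : ∀ t, HasDerivAt z ((u' t : ℂ) + (v' t : ℂ) * Complex.I) t := fun t =>
    (hu t).ofReal_comp.add ((hv t).ofReal_comp.mul_const _)
  have hw : ∀ t, HasDerivAt w ((B t : ℂ) + (A t : ℂ) * Complex.I) t := fun t =>
    (hΦB t).ofReal_comp.add ((hΦA t).ofReal_comp.mul_const _)
  have hE : ∀ t, HasDerivAt (fun t => z t * Complex.exp (-w t)) 0 t := by
    intro t
    have h1 := (hz t).mul ((hw t).neg.cexp)
    convert! h1 using 1
    have h2 : ((u' t : ℂ) + (v' t : ℂ) * Complex.I) = z t * ((B t : ℂ) + (A t : ℂ) * Complex.I) := by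
      have hn := hne t
      have e1 : u' t = u t * B t - v t * A t := by
        simp only [A, B]; field_simp; ring
      have e2 : v' t = u t * A t + v t * B t := by
        simp only [A, B]; field_simp; ring
      simp only [z]
      rw [e1, e2]; push_cast
      linear_combination (-(v t : ℂ) * A t) * Complex.I_sq
    rw [h2]; simp only [Pi.neg_apply]; ring
  have hconst := is_const_of_deriv_eq_zero (f := fun t => z t * Complex.exp (-w t))
    (fun t => (hE t).differentiableAt) (fun t => (hE t).deriv) T 0
  have hw0 : w 0 = 0 := by simp [w, ΦA, ΦB]
  have hzT : z T = z 0 := by simp only [z, hpu, hpv]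
  have hz0 : z 0 ≠ 0 := by
    intro h
    apply hne 0
    have h1 : u 0 = 0 := by simpa [z] using congrArg Complex.re h
    have h2 : v 0 = 0 := by simpa [z] using congrArg Complex.im h
    rw [h1, h2]; ring
  rw [hw0, hzT, neg_zero, Complex.exp_zero] at hconst
  have := mul_left_cancel₀ hz0 hconst
  obtain ⟨n, hn⟩ := Complex.exp_eq_one_iff.mp this
  refine ⟨-n, ?_⟩
  have him := congrArg Complex.im hn
  simp [w] at him
  change ΦA T = _
  push_cast
  linarith

end GI

namespace GI
open Topology

lemma hasDerivAt_evalP (P : MvPolynomial (Fin 2) ℝ) {x y : ℝ → ℝ} {x' y' t : ℝ}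
    (hx : HasDerivAt x x' t) (hy : HasDerivAt y y' t) :
    HasDerivAt (fun t => evalP P (x t) (y t))
      (evalP (pderiv 0 P) (x t) (y t) * x' + evalP (pderiv 1 P) (x t) (y t) * y') t := by
  induction P using MvPolynomial.induction_on with
  | C c => simpa [evalP] using hasDerivAt_const t c
  | add P Q hP hQ =>
    have := hP.add hQ
    simp only [evalP, map_add] at this ⊢
    convert! this using 1
    ring
  | mul_X P i hP =>
    have hX : HasDerivAt (fun t => ![x t, y t] i) (![x', y'] i) t := by
      fin_cases i
      · exact hx
      · exact hy
    have := hP.mul hX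
    simp only [evalP, map_mul, eval_X] at this ⊢
    convert! this using 1
    fin_cases i <;> simp [pderiv_X] <;> ring

lemma continuous_evalP (P : MvPolynomial (Fin 2) ℝ) {S : Type*} [TopologicalSpace S] {x y : S → ℝ}
    (hx : Continuous x) (hy : Continuous y) : Continuous fun s => evalP P (x s) (y s) := by
  unfold evalP
  apply (MvPolynomial.continuous_eval P).comp
  apply continuous_pi
  intro i
  fin_cases i
  · exact hx
  · exact hy

lemma analyticAt_evalP (P : MvPolynomial (Fin 2) ℝ) (t : ℝ) :
    AnalyticAt ℝ (fun t => evalP P (Real.cos t) (Real.sin t)) t := by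
  have := AnalyticAt.aeval_mvPolynomial (𝕜 := ℝ) (f := fun t : ℝ => ![Real.cos t, Real.sin t]) (z := t)
    (fun i => by
      fin_cases i
      · exact Real.analyticAt_cos
      · exact Real.analyticAt_sin) P
  exact this

noncomputable def dEv (P : MvPolynomial (Fin 2) ℝ) (r t : ℝ) : ℝ :=
  evalP (pderiv 0 P) (r * Real.cos t) (r * Real.sin t) * (r * -Real.sin t) +
  evalP (pderiv 1 P) (r * Real.cos t) (r * Real.sin t) * (r * Real.cos t)

lemma hasDerivAt_circ (P : MvPolynomial (Fin 2) ℝ) (r t : ℝ) :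
    HasDerivAt (fun t => evalP P (r * Real.cos t) (r * Real.sin t)) (dEv P r t) t :=
  hasDerivAt_evalP P ((Real.hasDerivAt_cos t).const_mul r) ((Real.hasDerivAt_sin t).const_mul r)

lemma continuous_circ (P : MvPolynomial (Fin 2) ℝ) {S : Type*} [TopologicalSpace S] {x y : S → ℝ}
    (hx : Continuous x) (hy : Continuous y) :
    Continuous fun s => evalP P (x s * Real.cos (y s)) (x s * Real.sin (y s)) :=
  continuous_evalP P (by fun_prop) (by fun_prop)

lemma continuous_dEv (P : MvPolynomial (Fin 2) ℝ) {S : Type*} [TopologicalSpace S] {x y : S → ℝ}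
    (hx : Continuous x) (hy : Continuous y) :
    Continuous fun s => dEv P (x s) (y s) := by
  unfold dEv
  have h0 := continuous_circ (pderiv 0 P) hx hy
  have h1 := continuous_circ (pderiv 1 P) hx hy
  fun_prop

noncomputable def integrand (f : MvPolynomial (Fin 2) ℝ) (r t : ℝ) : ℝ :=
  (uFun f r t * dEv (pderiv 1 f) r t - vFun f r t * dEv (pderiv 0 f) r t) /
        ((uFun f r t) ^ 2 + (vFun f r t) ^ 2)

lemma gradIndex_eq (f : MvPolynomial (Fin 2) ℝ) (r : ℝ) :
    gradIndex f r = (1 / (2 * Real.pi)) * ∫ t in (0:ℝ)..(2 * Real.pi), integrand f r t := by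
  unfold gradIndex integrand
  have h1 : ∀ t, deriv (vFun f r) t = dEv (pderiv 1 f) r t := fun t =>
    (hasDerivAt_circ (pderiv 1 f) r t).deriv
  have h2 : ∀ t, deriv (uFun f r) t = dEv (pderiv 0 f) r t := fun t =>
    (hasDerivAt_circ (pderiv 0 f) r t).deriv
  simp only [h1, h2]

lemma nonvanish {f : MvPolynomial (Fin 2) ℝ} {R : ℝ} (hR : 0 < R)
    (hadm : ∀ p : ℝ × ℝ, IsCriticalPt f p → p.1 ^ 2 + p.2 ^ 2 < R ^ 2) {r : ℝ} (hr : R ≤ r) (t : ℝ) :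
    uFun f r t ^ 2 + vFun f r t ^ 2 ≠ 0 := by
  intro h
  have hu : uFun f r t = 0 := by nlinarith [sq_nonneg (uFun f r t), sq_nonneg (vFun f r t)]
  have hv : vFun f r t = 0 := by nlinarith [sq_nonneg (uFun f r t), sq_nonneg (vFun f r t)]
  have := hadm (r * Real.cos t, r * Real.sin t) ⟨hu, hv⟩
  simp only at this
  have h1 : (r * Real.cos t) ^ 2 + (r * Real.sin t) ^ 2 = r ^ 2 := by
    linear_combination r ^ 2 * Real.sin_sq_add_cos_sq t
  rw [h1] at this
  nlinarith

lemma gradIndex_const {f : MvPolynomial (Fin 2) ℝ} {R : ℝ} (hR : 0 < R)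
    (hadm : ∀ p : ℝ × ℝ, IsCriticalPt f p → p.1 ^ 2 + p.2 ^ 2 < R ^ 2) {r : ℝ} (hr : R ≤ r) :
    gradIndex f R = gradIndex f r := by
  have hcont : ContinuousOn (gradIndex f) (Set.Ici R) := by
    rw [continuousOn_iff_continuous_domRestrict]
    have : (Set.Ici R).domRestrict (gradIndex f) = fun r : Set.Ici R =>
        (1 / (2 * Real.pi)) * ∫ t in (0:ℝ)..(2 * Real.pi), integrand f r t := by
      funext r; exact gradIndex_eq f r
    rw [this]
    apply Continuous.mul continuous_const
    apply intervalIntegral.continuous_parametric_intervalIntegral_of_continuous'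
    have hx : Continuous fun s : Set.Ici R × ℝ => (s.1 : ℝ) := by fun_prop
    have hy : Continuous fun s : Set.Ici R × ℝ => s.2 := by fun_prop
    have h1 := continuous_circ (pderiv 0 f) hx hy
    have h2 := continuous_circ (pderiv 1 f) hx hy
    have h3 := continuous_dEv (pderiv 0 f) hx hy
    have h4 := continuous_dEv (pderiv 1 f) hx hy
    unfold Function.uncurry integrand
    apply Continuous.div
    · exact (h1.mul h4).sub (h2.mul h3)
    · exact (h1.pow 2).add (h2.pow 2)
    · intro s; exact nonvanish hR hadm s.1.2 s.2
  have hintg : Set.MapsTo (gradIndex f) (Set.Ici R) (Set.range ((↑) : ℤ → ℝ)) := by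
    intro r hr
    obtain ⟨n, hn⟩ := winding_int (hasDerivAt_circ (pderiv 0 f) r) (hasDerivAt_circ (pderiv 1 f) r)
      (continuous_dEv (pderiv 0 f) continuous_const continuous_id)
      (continuous_dEv (pderiv 1 f) continuous_const continuous_id)
      (fun t => nonvanish hR hadm hr t) (T := 2 * Real.pi) (by simp) (by simp)
    refine ⟨n, ?_⟩
    rw [gradIndex_eq]
    have h2 : ∫ t in (0:ℝ)..(2 * Real.pi), integrand f r t = n * (2 * Real.pi) := hn
    rw [h2]
    have := Real.pi_pos
    field_simp
  have hdisc : DiscreteTopology (Set.range ((↑) : ℤ → ℝ)) := by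
    exact (Int.isClosedEmbedding_coe_real.isEmbedding.toHomeomorph.discreteTopology)
  obtain ⟨x, hx⟩ := isPreconnected_Ici.eqOn_const_of_mapsTo ⟨hdisc⟩ hcont hintg ⟨0, 0, by simp⟩
  exact (hx.2 (Set.self_mem_Ici)).trans (hx.2 hr).symm

end GI

namespace GI
open Topology

noncomputable def phi (P : MvPolynomial (Fin 2) ℝ) (t : ℝ) : ℝ := evalP P (Real.cos t) (Real.sin t)

lemma phi_contDiff (P : MvPolynomial (Fin 2) ℝ) : ContDiff ℝ (⊤ : ℕ∞) (phi P) := by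
  rw [contDiff_iff_contDiffAt]
  exact fun t => (analyticAt_evalP P t).contDiffAt

lemma phi_hasDerivAt (P : MvPolynomial (Fin 2) ℝ) (n : ℕ) (t : ℝ) :
    HasDerivAt (iteratedDeriv n (phi P)) (iteratedDeriv (n + 1) (phi P) t) t := by
  rw [iteratedDeriv_succ]
  apply DifferentiableAt.hasDerivAt
  exact ((phi_contDiff P).differentiable_iteratedDeriv n (by exact_mod_cast ENat.natCast_lt_top n)) t

noncomputable def Gf (f : MvPolynomial (Fin 2) ℝ) (d n : ℕ) (s t : ℝ) : ℝ :=
  ∑ k ∈ Finset.range (d + 1), (k * s ^ (d - k)) * iteratedDeriv n (phi (homogeneousComponent k f)) t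

lemma Gf_hasDerivAt (f : MvPolynomial (Fin 2) ℝ) (d : ℕ) (s : ℝ) (n : ℕ) (t : ℝ) :
    HasDerivAt (Gf f d n s) (Gf f d (n + 1) s t) t := by
  unfold Gf
  exact HasDerivAt.fun_sum fun k _ => (phi_hasDerivAt _ n t).const_mul _

lemma Gf_continuous (f : MvPolynomial (Fin 2) ℝ) (d n : ℕ) :
    Continuous fun x : ℝ × ℝ => Gf f d n x.1 x.2 := by
  unfold Gf
  apply continuous_finsetSum
  intro k _
  have : Continuous (iteratedDeriv n (phi (homogeneousComponent k f))) :=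
    continuous_iff_continuousAt.mpr fun t => (phi_hasDerivAt _ n t).continuousAt
  fun_prop

lemma Gf_zero (f : MvPolynomial (Fin 2) ℝ) (d n : ℕ) (t : ℝ) :
    Gf f d n 0 t = d * iteratedDeriv n (phi (homogeneousComponent d f)) t := by
  unfold Gf
  rw [Finset.sum_eq_single d]
  · simp
  · intro k hk hkd
    have : d - k ≠ 0 := by
      have := Finset.mem_range.mp hk
      omega
    simp [zero_pow this]
  · simp

/-- Euler identity on the circle. -/
lemma radial (f : MvPolynomial (Fin 2) ℝ) (d : ℕ) (hd : f.totalDegree = d) {r : ℝ} (hr : r ≠ 0) (t : ℝ) :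
    r * (uFun f r t * Real.cos t + vFun f r t * Real.sin t) = r ^ d * Gf f d 0 r⁻¹ t := by
  have h1 : X 0 * pderiv 0 f + X 1 * pderiv 1 f =
      ∑ k ∈ Finset.range (d + 1), k • homogeneousComponent k f := by
    conv_lhs => rw [← sum_homogeneousComponent f, hd]
    rw [map_sum, map_sum, Finset.mul_sum, Finset.mul_sum, ← Finset.sum_add_distrib]
    refine Finset.sum_congr rfl fun k _ => ?_
    rw [← (homogeneousComponent_isHomogeneous k f).sum_X_mul_pderiv]
    simp
  have h2 := congrArg (eval ![r * Real.cos t, r * Real.sin t]) h1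
  rw [map_add, map_mul, map_mul, map_sum] at h2
  simp only [eval_X, Matrix.cons_val_zero, Matrix.cons_val_one, map_nsmul] at h2
  have h3 : r * (uFun f r t * Real.cos t + vFun f r t * Real.sin t) =
    r * Real.cos t * (eval ![r * Real.cos t, r * Real.sin t]) ((pderiv 0) f) +
      r * Real.sin t * (eval ![r * Real.cos t, r * Real.sin t]) ((pderiv 1) f) := by
    unfold uFun vFun evalP; ring
  rw [h3, h2]
  unfold Gf
  rw [Finset.mul_sum]
  refine Finset.sum_congr rfl fun k hk => ?_
  have h4 := evalP_scale (homogeneousComponent_isHomogeneous k f) r (Real.cos t) (Real.sin t)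
  unfold evalP at h4
  rw [h4, iteratedDeriv_zero]
  unfold phi evalP
  have h5 : r ^ d = r ^ k * r ^ (d - k) := by
    rw [← pow_add]; congr 1
    have := Finset.mem_range.mp hk
    omega
  rw [h5, inv_pow, nsmul_eq_mul]
  field_simp

lemma order_le {F : MvPolynomial (Fin 2) ℝ} {k : ℕ} (hF : F.IsHomogeneous k) (h0 : F ≠ 0) (t₀ : ℝ) :
    ∃ m ≤ linMult F (Real.cos t₀) (Real.sin t₀), iteratedDeriv m (phi F) t₀ ≠ 0 := by
  obtain ⟨m, Q, hFQ, hQ⟩ := exists_factor k hF h0 (a := Real.cos t₀) (b := Real.sin t₀)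
    (Real.cos_sq_add_sin_sq t₀)
  have hle : m ≤ linMult F (Real.cos t₀) (Real.sin t₀) := le_linMult h0 ⟨Q, hFQ⟩
  have hphi : phi F = (phi (lin (Real.cos t₀) (Real.sin t₀))) ^ m * phi Q := by
    funext t
    simp only [phi, Pi.mul_apply, Pi.pow_apply]
    conv_lhs => rw [hFQ]
    simp [evalP]
  have hL : AnalyticAt ℝ (phi (lin (Real.cos t₀) (Real.sin t₀))) t₀ := analyticAt_evalP _ t₀
  have hQa : AnalyticAt ℝ (phi Q) t₀ := analyticAt_evalP _ t₀
  have hL1 : analyticOrderAt (phi (lin (Real.cos t₀) (Real.sin t₀))) t₀ = 1 := by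
    apply hL.analyticOrderAt_eq_one_of_zero_deriv_ne_zero
    · simp only [phi, lin_eval]; ring
    · have : HasDerivAt (phi (lin (Real.cos t₀) (Real.sin t₀)))
          (Real.sin t₀ * (-Real.sin t₀) - Real.cos t₀ * Real.cos t₀) t₀ := by
        have e : phi (lin (Real.cos t₀) (Real.sin t₀)) =
            fun t => Real.sin t₀ * Real.cos t - Real.cos t₀ * Real.sin t := by
          funext t; simp only [phi, lin_eval]
        rw [e]
        exact ((Real.hasDerivAt_cos t₀).const_mul _).sub ((Real.hasDerivAt_sin t₀).const_mul _)
      rw [this.deriv]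
      have := Real.sin_sq_add_cos_sq t₀
      nlinarith
  have hord : analyticOrderAt (phi F) t₀ = m := by
    rw [hphi, analyticOrderAt_mul (hL.pow m) hQa, analyticOrderAt_pow hL, hL1,
      hQa.analyticOrderAt_eq_zero.mpr hQ]
    simp
  by_contra hcon
  push Not at hcon
  have h1 : ((m + 1 : ℕ) : ℕ∞) ≤ analyticOrderAt (phi F) t₀ := by
    rw [natCast_le_analyticOrderAt_iff_iteratedDeriv_eq_zero (f := phi F) (analyticAt_evalP F t₀)]
    exact fun i hi => hcon i (by omega)
  rw [hord] at h1
  have : m + 1 ≤ m := by exact_mod_cast h1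
  omega

lemma finite_of_card_le {S : Set ℝ} {n : ℕ} (h : ∀ Z : Finset ℝ, (∀ t ∈ Z, t ∈ S) → Z.card ≤ n) :
    S.Finite := by
  by_contra hinf
  obtain ⟨Z, hZ, hc⟩ := Set.Infinite.exists_subset_card_eq hinf (n + 1)
  have := h Z (fun t ht => hZ ht)
  omega

lemma half {f : MvPolynomial (Fin 2) ℝ} {d : ℕ} (hd1 : 1 ≤ d)
    (h0 : homogeneousComponent d f ≠ 0) {a : ℝ} (ha : phi (homogeneousComponent d f) a ≠ 0) :
    ∀ᶠ s in 𝓝 (0 : ℝ), ∀ Z : Finset ℝ,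
      (∀ t ∈ Z, t ∈ Set.Icc a (a + Real.pi) ∧ Gf f d 0 s t = 0) →
      Z.card ≤ realDegreeOf (homogeneousComponent d f) := by
  set F := homogeneousComponent d f with hFdef
  have hF : F.IsHomogeneous d := homogeneousComponent_isHomogeneous d f
  have ha' : phi F (a + Real.pi) ≠ 0 := by
    have := evalP_scale hF (-1) (Real.cos a) (Real.sin a)
    unfold phi at ha ⊢
    rw [Real.cos_add_pi, Real.sin_add_pi, ← neg_one_mul, ← neg_one_mul (Real.sin a), this]
    exact mul_ne_zero (pow_ne_zero _ (by norm_num)) ha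
  let μ : ℝ → ℕ := fun t => linMult F (Real.cos t) (Real.sin t)
  have hμ0 : ∀ t, μ t ≠ 0 → phi F t = 0 := fun t h => linMult_pos h
  let S : Set ℝ := {t | t ∈ Set.Ioo a (a + Real.pi) ∧ μ t ≠ 0}
  have hSfin : S.Finite := by
    apply finite_of_card_le (n := realDegreeOf F)
    intro Z hZ
    refine le_trans ?_ (sum_linMult_le hF h0 a Z (fun t ht => (hZ t ht).1))
    rw [Finset.card_eq_sum_ones]
    exact Finset.sum_le_sum fun t ht => Nat.one_le_iff_ne_zero.mpr (hZ t ht).2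
  have hev := zeros_family (G := Gf f d) (Gf_hasDerivAt f d) (Gf_continuous f d) (a := a)
    (b := a + Real.pi) hSfin.toFinset μ
    (by
      intro t ht hm
      rw [Set.Finite.mem_toFinset]
      refine ⟨⟨lt_of_le_of_ne ht.1 ?_, lt_of_le_of_ne ht.2 ?_⟩, hm⟩
      · rintro rfl; exact ha (hμ0 _ hm)
      · rintro rfl; exact ha' (hμ0 _ hm))
    (by
      intro t _
      obtain ⟨m, hm, hne⟩ := order_le hF h0 t
      refine ⟨m, hm, ?_⟩
      rw [Gf_zero]
      exact mul_ne_zero (by positivity) hne)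
  filter_upwards [hev] with s hs Z hZ
  refine (hs Z hZ).trans (sum_linMult_le hF h0 a _ (fun t ht => ?_))
  rw [Set.Finite.mem_toFinset] at ht
  exact ht.1

lemma top_ne_zero {f : MvPolynomial (Fin 2) ℝ} {d : ℕ} (hd : f.totalDegree = d) (hd1 : 1 ≤ d) :
    homogeneousComponent d f ≠ 0 := by
  intro h
  have hf : f ≠ 0 := by rintro rfl; simp at hd; omega
  obtain ⟨m, hm, hdeg⟩ := Finset.exists_mem_eq_sup f.support
    (by rwa [Finset.nonempty_iff_ne_empty, Ne, MvPolynomial.support_eq_empty])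
    (fun s => s.sum fun _ e => e)
  have h1 : f.totalDegree = m.degree := hdeg
  have h2 := coeff_homogeneousComponent d f m
  rw [h, if_pos (by omega), coeff_zero] at h2
  exact (MvPolynomial.mem_support_iff.mp hm) h2.symm

lemma exists_angle {F : MvPolynomial (Fin 2) ℝ} {d : ℕ} (hF : F.IsHomogeneous d) (h0 : F ≠ 0) :
    ∃ a, phi F a ≠ 0 := by
  by_contra hcon
  push Not at hcon
  apply h0
  apply MvPolynomial.funext
  intro v
  rw [map_zero]
  let z : ℂ := ⟨v 0, v 1⟩
  have h1 := evalP_scale hF ‖z‖ (Real.cos z.arg) (Real.sin z.arg)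
  have h2 := hcon z.arg
  unfold phi at h2
  rw [h2, mul_zero, Complex.norm_mul_cos_arg, Complex.norm_mul_sin_arg] at h1
  have : ![v 0, v 1] = v := by funext i; fin_cases i <;> rfl
  unfold evalP at h1
  simp only [z] at h1
  rw [this] at h1
  exact h1

lemma bound_large {f : MvPolynomial (Fin 2) ℝ} {d N : ℕ} (hd : f.totalDegree = d) {r a : ℝ} (hr : 0 < r)
    (hne : ∀ t, uFun f r t ^ 2 + vFun f r t ^ 2 ≠ 0)
    (h1 : ∀ Z : Finset ℝ, (∀ t ∈ Z, t ∈ Set.Icc a (a + Real.pi) ∧ Gf f d 0 r⁻¹ t = 0) → Z.card ≤ N)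
    (h2 : ∀ Z : Finset ℝ, (∀ t ∈ Z, t ∈ Set.Icc (a + Real.pi) (a + Real.pi + Real.pi) ∧
      Gf f d 0 r⁻¹ t = 0) → Z.card ≤ N) :
    1 - (N : ℝ) - 1 / 2 ≤ gradIndex f r := by
  classical
  have hpi := Real.pi_pos
  let u := uFun f r
  let v := vFun f r
  let u' := dEv (pderiv 0 f) r
  let v' := dEv (pderiv 1 f) r
  have hu : ∀ t, HasDerivAt u (u' t) t := hasDerivAt_circ (pderiv 0 f) r
  have hv : ∀ t, HasDerivAt v (v' t) t := hasDerivAt_circ (pderiv 1 f) r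
  let p : ℝ → ℝ := fun t => u t * Real.cos t + v t * Real.sin t
  let q : ℝ → ℝ := fun t => v t * Real.cos t - u t * Real.sin t
  let p' : ℝ → ℝ := fun t => (u' t * Real.cos t + u t * -Real.sin t) + (v' t * Real.sin t + v t * Real.cos t)
  let q' : ℝ → ℝ := fun t => (v' t * Real.cos t + v t * -Real.sin t) - (u' t * Real.sin t + u t * Real.cos t)
  have hp : ∀ t, HasDerivAt p (p' t) t := fun t =>
    ((hu t).mul (Real.hasDerivAt_cos t)).add ((hv t).mul (Real.hasDerivAt_sin t))
  have hq : ∀ t, HasDerivAt q (q' t) t := fun t =>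
    ((hv t).mul (Real.hasDerivAt_cos t)).sub ((hu t).mul (Real.hasDerivAt_sin t))
  have hA : Continuous (integrand f r) := by
    have hx : Continuous fun _ : ℝ => r := continuous_const
    have hy : Continuous fun t : ℝ => t := continuous_id
    have h1 := continuous_circ (pderiv 0 f) hx hy
    have h2 := continuous_circ (pderiv 1 f) hx hy
    have h3 := continuous_dEv (pderiv 0 f) hx hy
    have h4 := continuous_dEv (pderiv 1 f) hx hy
    exact Continuous.div ((h1.mul h4).sub (h2.mul h3)) ((h1.pow 2).add (h2.pow 2)) hne
  let Φ : ℝ → ℝ := fun x => (∫ t in (0:ℝ)..x, integrand f r t) - x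
  have hΦ : ∀ t, HasDerivAt Φ ((p t * q' t - q t * p' t) / (p t ^ 2 + q t ^ 2)) t := by
    intro t
    have h1 := (intervalIntegral.integral_hasDerivAt_right (hA.intervalIntegrable 0 t)
      (hA.stronglyMeasurableAtFilter _ _) hA.continuousAt).sub (hasDerivAt_id t)
    convert! h1 using 1
    have hcs := Real.sin_sq_add_cos_sq t
    have e1 : p t ^ 2 + q t ^ 2 = u t ^ 2 + v t ^ 2 := by
      simp only [p, q]
      linear_combination (u t ^ 2 + v t ^ 2) * hcs
    have e2 : p t * q' t - q t * p' t = (u t * v' t - v t * u' t) - (u t ^ 2 + v t ^ 2) := by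
      simp only [p, q, p', q']
      linear_combination ((u t * v' t - v t * u' t) -
        (u t ^ 2 + v t ^ 2) ) * hcs
    rw [e1, e2, sub_div, div_self (hne t)]
    rfl
  have hG : ∀ t, p t = 0 → Gf f d 0 r⁻¹ t = 0 := by
    intro t ht
    have := radial f d hd hr.ne' t
    have hpt : uFun f r t * Real.cos t + vFun f r t * Real.sin t = 0 := ht
    rw [hpt, mul_zero] at this
    exact (mul_eq_zero.mp this.symm).resolve_left (pow_ne_zero _ hr.ne')
  have hf1 := finite_of_card_le (S := {t | t ∈ Set.Icc a (a + Real.pi) ∧ Gf f d 0 r⁻¹ t = 0}) h1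
  have hf2 := finite_of_card_le
    (S := {t | t ∈ Set.Icc (a + Real.pi) (a + Real.pi + Real.pi) ∧ Gf f d 0 r⁻¹ t = 0}) h2
  have hc1 := h1 hf1.toFinset (fun t ht => by rwa [Set.Finite.mem_toFinset] at ht)
  have hc2 := h2 hf2.toFinset (fun t ht => by rwa [Set.Finite.mem_toFinset] at ht)
  have harc := arcs hp hq hΦ (a := a) (hf1.toFinset ∪ hf2.toFinset) (a + 2 * Real.pi) (by linarith) (by
    intro t ht h0
    rw [Finset.mem_union, Set.Finite.mem_toFinset, Set.Finite.mem_toFinset]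
    rcases le_total t (a + Real.pi) with h | h
    · exact Or.inl ⟨⟨ht.1.le, h⟩, hG t h0⟩
    · exact Or.inr ⟨⟨h, by linarith [ht.2]⟩, hG t h0⟩)
  have hcard : ((hf1.toFinset ∪ hf2.toFinset).card : ℝ) ≤ 2 * N := by
    have := (Finset.card_union_le hf1.toFinset hf2.toFinset).trans (add_le_add hc1 hc2)
    have : (hf1.toFinset ∪ hf2.toFinset).card ≤ 2 * N := by omega
    exact_mod_cast this
  have hper : Function.Periodic (integrand f r) (2 * Real.pi) := by
    intro t
    simp [integrand, uFun, vFun, dEv]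
  have hintg : Φ (a + 2 * Real.pi) - Φ a = (∫ t in (0:ℝ)..(2 * Real.pi), integrand f r t) - 2 * Real.pi := by
    have e := hper.intervalIntegral_add_eq a 0
    rw [zero_add] at e
    have e2 := intervalIntegral.integral_interval_sub_left (hA.intervalIntegrable (μ := MeasureTheory.volume) 0 (a + 2 * Real.pi))
      (hA.intervalIntegrable 0 a)
    simp only [Φ]
    linarith
  rw [hintg] at harc
  have hlow := (abs_le.mp harc).1
  rw [gradIndex_eq, one_div_mul_eq_div, le_div_iff₀ (by positivity)]
  nlinarith

end GI

theorem index_ge_one_sub_real_degree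
    (f : MvPolynomial (Fin 2) ℝ) (d : ℕ) (hd : f.totalDegree = d) (hd1 : 1 ≤ d)
    (hfin : {p : ℝ × ℝ | IsCriticalPt f p}.Finite)
    (R : ℝ) (hR : 0 < R)
    (hadm : ∀ p : ℝ × ℝ, IsCriticalPt f p → p.1 ^ 2 + p.2 ^ 2 < R ^ 2)
    (i : ℤ) (hi : (i : ℝ) = gradIndex f R) :
    1 - (realDegreeOf (homogeneousComponent d f) : ℤ) ≤ i := by
  have h0 := GI.top_ne_zero hd hd1
  have hF := homogeneousComponent_isHomogeneous d f
  obtain ⟨a, ha⟩ := GI.exists_angle hF h0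
  have ha' : GI.phi (homogeneousComponent d f) (a + Real.pi) ≠ 0 := by
    have := GI.evalP_scale hF (-1) (Real.cos a) (Real.sin a)
    unfold GI.phi at ha ⊢
    rw [Real.cos_add_pi, Real.sin_add_pi, ← neg_one_mul, ← neg_one_mul (Real.sin a), this]
    exact mul_ne_zero (pow_ne_zero _ (by norm_num)) ha
  have hev := (GI.half hd1 h0 ha).and (GI.half hd1 h0 ha')
  have hev2 := (tendsto_inv_atTop_zero (𝕜 := ℝ)).eventually hev
  obtain ⟨r, ⟨h1, h2⟩, hr⟩ := (hev2.and (eventually_ge_atTop R)).exists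
  have hb := GI.bound_large hd (hR.trans_le hr) (GI.nonvanish hR hadm hr) h1 h2
  rw [← GI.gradIndex_const hR hadm hr, ← hi] at hb
  have : (1 - (realDegreeOf (homogeneousComponent d f) : ℤ) : ℝ) < (i : ℝ) + 1 := by
    push_cast; linarith
  have h3 : 1 - (realDegreeOf (homogeneousComponent d f) : ℤ) < i + 1 := by exact_mod_cast this
  omega
end
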